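/- arXiv:2003.11578 — 3 statements merged into one kernel-verified Lean document; each statement's English description precedes it below -/
import Mathlib

section
/- Suppose A is a finite nonempty set equipped with linear orders ≼_1, ≼_2, …, ≼_n (n ≥ 1). Then there is an element a ∈ A such that for every i with 1 ≤ i ≤ n, the number of elements b ∈ A with b ≼_i a is at least |A|/n. -/
open Finset

/-!
Call `a ∈ A` bad for the order `i` if fewer than `|A|/n` elements of `A` lie below `a` in that
order. The bad elements for `i` all lie below the largest of them, so there are fewer than `|A|/n`
of them (`card_low_lt`). Hence the bad sets of the `n` orders together have fewer than `|A|`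
elements, and some element of `A` is bad for no order.
-/

open Classical in
/-- In a single total preorder, fewer than `|A|/n` elements have fewer than `|A|/n` elements
below them. -/
lemma card_low_lt {α : Type*} (A : Finset α) (hA : A.Nonempty) (n : ℕ) (r : α → α → Prop)
    (hrefl : ∀ a ∈ A, r a a)
    (htrans : ∀ a ∈ A, ∀ b ∈ A, ∀ c ∈ A, r a b → r b c → r a c)
    (htotal : ∀ a ∈ A, ∀ b ∈ A, r a b ∨ r b a) :
    n * #{a ∈ A | n * #{b ∈ A | r b a} < #A} < #A := by
  set B : Finset α := {a ∈ A | n * #{b ∈ A | r b a} < #A} with hB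
  rcases B.eq_empty_or_nonempty with h | h
  · rw [h, card_empty, mul_zero]
    exact hA.card_pos
  -- A bad element with the most elements below it is a largest bad element.
  obtain ⟨m, hm, hmax⟩ := B.exists_max_image (fun a => #{b ∈ A | r b a}) h
  obtain ⟨hmA, hmlt⟩ := mem_filter.mp hm
  have hsub : B ⊆ {b ∈ A | r b m} := by
    intro b hb
    have hbA : b ∈ A := (mem_filter.mp hb).1
    refine mem_filter.mpr ⟨hbA, ?_⟩
    by_contra hbm
    have hmb : r m b := (htotal b hbA m hmA).resolve_left hbm
    have hlt : #{c ∈ A | r c m} < #{c ∈ A | r c b} := by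
      apply card_lt_card
      refine (ssubset_iff_of_subset ?_).mpr ⟨b, ?_, ?_⟩
      · intro c hc
        obtain ⟨hcA, hcm⟩ := mem_filter.mp hc
        exact mem_filter.mpr ⟨hcA, htrans c hcA m hmA b hbA hcm hmb⟩
      · exact mem_filter.mpr ⟨hbA, hrefl b hbA⟩
      · exact fun hc => hbm (mem_filter.mp hc).2
    exact absurd (hmax b hb) (not_le.mpr hlt)
  exact (Nat.mul_le_mul_left n (card_le_card hsub)).trans_lt hmlt

/-- **Combinatorial lemma on linear orders.**
If `A` is a finite nonempty set carrying `n ≥ 1` linear orders `≼_1, …, ≼_n`, then there is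
`a ∈ A` such that for each `i`, the number of `b ∈ A` with `b ≼_i a` is at least `|A|/n`. -/
theorem exists_common_high_element {α : Type*} (A : Finset α) (hA : A.Nonempty)
    (n : ℕ) (hn : 1 ≤ n) (r : Fin n → α → α → Prop)
    (hrefl : ∀ i, ∀ a ∈ A, r i a a)
    (hantisymm : ∀ i, ∀ a ∈ A, ∀ b ∈ A, r i a b → r i b a → a = b)
    (htrans : ∀ i, ∀ a ∈ A, ∀ b ∈ A, ∀ c ∈ A, r i a b → r i b c → r i a c)
    (htotal : ∀ i, ∀ a ∈ A, ∀ b ∈ A, r i a b ∨ r i b a) :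
    ∃ a ∈ A, ∀ i : Fin n,
      (A.card : ℝ) / n ≤ ({b ∈ (A : Set α) | r i b a}.ncard : ℝ) := by
  classical
  have : Nonempty (Fin n) := ⟨⟨0, hn⟩⟩
  let B : Fin n → Finset α := fun i => {a ∈ A | n * #{b ∈ A | r i b a} < #A}
  have hB : ∀ i, n * #(B i) < #A := fun i =>
    card_low_lt A hA n (r i) (hrefl i) (htrans i) (htotal i)
  have hU : #(univ.biUnion B) < #A := by
    have hsum : ∑ i, n * #(B i) < ∑ _i : Fin n, #A :=
      sum_lt_sum_of_nonempty univ_nonempty fun i _ => hB i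
    rw [← mul_sum, sum_const, card_univ, Fintype.card_fin, smul_eq_mul] at hsum
    exact card_biUnion_le.trans_lt (lt_of_mul_lt_mul_left hsum (Nat.zero_le n))
  obtain ⟨a, haA, ha⟩ := exists_mem_notMem_of_card_lt_card hU
  refine ⟨a, haA, fun i => ?_⟩
  have hai : #A ≤ n * #{b ∈ A | r i b a} := by
    by_contra hlt
    exact ha (mem_biUnion.mpr ⟨i, mem_univ i, mem_filter.mpr ⟨haA, not_le.mp hlt⟩⟩)
  have hset : {b ∈ (A : Set α) | r i b a} = (({b ∈ A | r i b a} : Finset α) : Set α) := by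
    ext b
    simp
  rw [hset, Set.ncard_coe_finset, div_le_iff₀' (by exact_mod_cast hn)]
  exact_mod_cast hai
end

section
/- Fix game parameters d, ρ₀, (β_i) as described, let 0 < δ ≤ d and A ⊆ ℝ^d. If player II has a winning strategy in the δ-Hausdorff dimension game G^δ_β̄(A), then dimH(A) ≤ δ. -/
/-!
Fix `s > δ` and a winning strategy `τ` of player II. Player I may try to steer the answers of `τ`
towards a prescribed point `z`: at a position with last point `x` at distance less than `ρ n / 4`
from `z`, take a rational grid `Q` of mesh comparable to `ρ (n+1)` filling a ball around `x`, and
let player I offer a maximal `3 ρ (n+1)`-separated subset of `Q`. Whatever point `τ` answers is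
removed from `Q`, and a new set is offered (at the same position) from what remains, until `Q` is
exhausted. In this way every point of `Q` is the answer to one of the offered sets. When `j` points
remain, the offered set has at least `j / D` of them, where `D` depends only on `d`; hence the
offered sets `F` satisfy `∑ 1 / |F| ≤ D ∑_{j ≤ |Q|} 1 / j = O(log (1 / β n))`
(`exists_greedy_family`, `exists_moves`).

Iterating gives a finitely branching tree of positions in which every `z` near the starting point
is the limit of a branch, and in which the positions of `n + 1` rounds have total weight
`∑ ∏ 1 / |F i| ≤ ∏_{i<n} O(log (1 / β i))` (`exists_tree`). If `z ∈ A`, player I must have broken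
the last rule along its branch, so infinitely often `∏_{i ≤ n} 1 / |F i| > ∏_{i ≤ n} β i ^ δ`. By
the bound on the total weight there are at most `∏_{i<n} O(log (1 / β i)) · ∏_{i≤n} β i ^ (-δ)` such
positions, each covering the corresponding points by a ball of radius `ρ n / 4`. Since `β i → 0`,
and since `β n ^ (-δ)` is absorbed by the slow decay of `β`, the sum of the `s`-th powers of the
radii converges (`exists_cover_bound`). So `A` has finite `s`-dimensional Hausdorff measure near
every rational point, and `dimH A ≤ s`.
-/

open MeasureTheory Metric Filter Set Topology ENNReal

noncomputable section

namespace HDGame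

/-- `d`-dimensional Euclidean space. -/
abbrev Euc (d : ℕ) := EuclideanSpace ℝ (Fin d)

/-- The hypotheses on the game parameters `d`, `ρ₀`, `(β i)`:
`d ≥ 1`, `ρ₀ > 0`, `0 < β (i+1) ≤ β i < 1/2`, `β i → 0`, and
for every `η > 0`, `β n ≥ ∏_{i<n} β i ^ η` for all large `n`. -/
structure Params (d : ℕ) (ρ₀ : ℝ) (β : ℕ → ℝ) : Prop where
  hd : 1 ≤ d
  hρ₀ : 0 < ρ₀
  hβpos : ∀ i, 0 < β i
  hβmono : ∀ i, β (i + 1) ≤ β i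
  hβhalf : ∀ i, β i < 1 / 2
  hβlim : Tendsto β atTop (nhds 0)
  hβslow : ∀ η : ℝ, 0 < η → ∃ n₀ : ℕ, ∀ n ≥ n₀, (∏ i ∈ Finset.range n, β i ^ η) ≤ β n

variable (ρ₀ : ℝ) (β : ℕ → ℝ)

/-- The radii `ρ n = (∏_{i<n} β i) · ρ₀`. -/
def ρ (n : ℕ) : ℝ := (∏ i ∈ Finset.range n, β i) * ρ₀

/-- A point of `ℝ^d` all of whose coordinates are rational. -/
def RatPt {d : ℕ} (p : Euc d) : Prop := ∀ j : Fin d, ∃ q : ℚ, p j = (q : ℝ)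

variable {d : ℕ}

/-- Rules (1) and (2) for player I's move `F` at round `i`: `F` is a (nonempty) finite set of
rational points which is `3·ρ i`-separated. -/
def LegalSet (i : ℕ) (F : Finset (Euc d)) : Prop :=
  F.Nonempty ∧ (∀ p ∈ F, RatPt p) ∧
    ∀ p ∈ F, ∀ q ∈ F, p ≠ q → 3 * ρ ρ₀ β i ≤ dist p q

/-- Player I has followed rules (1)–(3) through round `n` of the run `(F, x)`
(this is everything player II needs to know before answering `F n`). -/
def LegalThrough (F : ℕ → Finset (Euc d)) (x : ℕ → Euc d) (n : ℕ) : Prop :=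
  (∀ i ≤ n, LegalSet ρ₀ β i (F i)) ∧
    ∀ i < n, ∀ p ∈ F (i + 1), p ∈ ball (x i) ((1 - β i) * ρ ρ₀ β i)

/-- Player I follows all of rules (1)–(4) along the infinite run `(F, x)`, for exponent `δ`.
Rule (4), `limsup_n (∏_{i<n} |F i|⁻¹)/(∏_{i<n} β i ^ δ) ≤ c` for some `c > 0`, is
phrased equivalently as eventual boundedness by some `c > 0`. -/
def IRules (δ : ℝ) (F : ℕ → Finset (Euc d)) (x : ℕ → Euc d) : Prop :=
  (∀ i, LegalSet ρ₀ β i (F i)) ∧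
    (∀ i, ∀ p ∈ F (i + 1), p ∈ ball (x i) ((1 - β i) * ρ ρ₀ β i)) ∧
    ∃ c : ℝ, 0 < c ∧ ∀ᶠ n in atTop,
      (∏ i ∈ Finset.range n, ((F i).card : ℝ))⁻¹ / (∏ i ∈ Finset.range n, β i ^ δ) ≤ c

/-- A strategy for player I in the ordinary game: given the finite position (the list of
completed rounds, each a pair (Fᵢ, xᵢ)), produce the next finite set. -/
abbrev StratI (d : ℕ) := List (Finset (Euc d) × Euc d) → Finset (Euc d)

/-- A strategy for player II in the ordinary game: given the finite position and player I's
latest move, produce a point. -/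
abbrev StratII (d : ℕ) := List (Finset (Euc d) × Euc d) → Finset (Euc d) → Euc d

/-- The position after `n` complete rounds of the run `(F, x)`. -/
def hist (F : ℕ → Finset (Euc d)) (x : ℕ → Euc d) (n : ℕ) : List (Finset (Euc d) × Euc d) :=
  List.ofFn fun i : Fin n => (F i, x i)

/-- The run `(F, x)` is consistent with the strategy `σ` of player I. -/
def ConsistentI (σ : StratI d) (F : ℕ → Finset (Euc d)) (x : ℕ → Euc d) : Prop :=
  ∀ n, F n = σ (hist F x n)

/-- The run `(F, x)` is consistent with the strategy `τ` of player II. -/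
def ConsistentII (τ : StratII d) (F : ℕ → Finset (Euc d)) (x : ℕ → Euc d) : Prop :=
  ∀ n, x n = τ (hist F x n) (F n)

/-- `σ` is a winning strategy for player I in `G^δ_β̄(A)`: along any run consistent with `σ` in
which player II obeys the rule `x n ∈ F n`, player I obeys all rules and `lim x n ∈ A`. -/
def WinsI (δ : ℝ) (A : Set (Euc d)) (σ : StratI d) : Prop :=
  ∀ F x, ConsistentI σ F x → (∀ n, x n ∈ F n) →
    IRules ρ₀ β δ F x ∧ ∃ z ∈ A, Tendsto x atTop (nhds z)

/-- `τ` is a winning strategy for player II in `G^δ_β̄(A)`: along any run consistent with `τ`,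
player II plays inside player I's sets as long as player I has been legal, and if player I
obeys all rules then the limit of player II's points is not in `A`. -/
def WinsII (δ : ℝ) (A : Set (Euc d)) (τ : StratII d) : Prop :=
  ∀ F x, ConsistentII τ F x →
    (∀ n, LegalThrough ρ₀ β F x n → x n ∈ F n) ∧
    (IRules ρ₀ β δ F x → ∀ z, Tendsto x atTop (nhds z) → z ∉ A)

end HDGame

open HDGame

namespace HDGame

/-! ### Grids of rational points -/

/-- The point of the grid `(m ℤ)^d` with integer coordinates `k`. -/
def gridPt {d : ℕ} (m : ℚ) (k : Fin d → ℤ) : Euc d :=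
  WithLp.toLp 2 fun j => (m : ℝ) * (k j : ℝ)

lemma abs_coord_sub_le_dist {d : ℕ} (p q : Euc d) (j : Fin d) : |p j - q j| ≤ dist p q := by
  have h := PiLp.norm_apply_le (p - q) j
  rw [dist_eq_norm]
  simpa [Real.norm_eq_abs] using h

lemma dist_le_card_mul {d : ℕ} (p q : Euc d) {e : ℝ} (he : 0 ≤ e) (h : ∀ j, |p j - q j| ≤ e) :
    dist p q ≤ d * e := by
  rw [EuclideanSpace.dist_eq]
  refine Real.sqrt_le_iff.2 ⟨by positivity, ?_⟩
  calc ∑ j, dist (p j) (q j) ^ 2 ≤ ∑ _j : Fin d, e ^ 2 := by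
        refine Finset.sum_le_sum fun j _ => ?_
        rw [Real.dist_eq]
        exact pow_le_pow_left₀ (abs_nonneg _) (h j) 2
    _ = d * e ^ 2 := by simp
    _ ≤ (d * e) ^ 2 := by
        rw [mul_pow]
        refine mul_le_mul_of_nonneg_right ?_ (by positivity)
        rcases Nat.eq_zero_or_pos d with h0 | h0
        · simp [h0]
        · have : (1 : ℝ) ≤ d := by exact_mod_cast h0
          nlinarith

/-- The indices of all grid points lying in the cube of half-side `r` around `y`. -/
def gridBox {d : ℕ} (m : ℚ) (y : Euc d) (r : ℝ) : Finset (Fin d → ℤ) :=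
  Fintype.piFinset fun j => Finset.Icc ⌈(y j - r) / m⌉ ⌊(y j + r) / m⌋

lemma card_gridBox_le {d : ℕ} {m : ℚ} (hm : 0 < m) (y : Euc d) {r : ℝ} (hr : 0 ≤ r) :
    ((gridBox m y r).card : ℝ) ≤ (2 * r / m + 1) ^ d := by
  have hm' : (0 : ℝ) < m := by exact_mod_cast hm
  have hnn : 0 ≤ 2 * r / m + 1 := by positivity
  unfold gridBox
  rw [Fintype.card_piFinset, Nat.cast_prod]
  calc _ ≤ ∏ _j : Fin d, (2 * r / m + 1) := by
        refine Finset.prod_le_prod (fun _ _ => Nat.cast_nonneg _) fun j _ => ?_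
        rw [Int.card_Icc]
        have h1 := Int.floor_le ((y j + r) / m)
        have h2 := Int.le_ceil ((y j - r) / m)
        have h3 : (y j + r) / m - (y j - r) / m = 2 * r / m := by ring
        rcases le_total 0 (⌊(y j + r) / m⌋ + 1 - ⌈(y j - r) / m⌉) with h | h
        · have : (((⌊(y j + r) / m⌋ + 1 - ⌈(y j - r) / m⌉).toNat : ℤ) : ℝ)
              = ((⌊(y j + r) / m⌋ + 1 - ⌈(y j - r) / m⌉ : ℤ) : ℝ) := by
            rw [Int.toNat_of_nonneg h]
          rw [Int.cast_natCast] at this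
          rw [this]
          push_cast
          linarith
        · rw [Int.toNat_of_nonpos h]
          simpa using hnn
    _ = _ := by simp

lemma mem_gridBox {d : ℕ} {m : ℚ} (hm : 0 < m) {y : Euc d} {r : ℝ} {k : Fin d → ℤ}
    (h : dist (gridPt m k) y ≤ r) : k ∈ gridBox m y r := by
  have hm' : (0 : ℝ) < m := by exact_mod_cast hm
  refine Fintype.mem_piFinset.2 fun j => Finset.mem_Icc.2 ?_
  have h1 := (abs_coord_sub_le_dist (gridPt m k) y j).trans h
  have h2 : gridPt m k j = (m : ℝ) * (k j : ℝ) := rfl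
  rw [h2, abs_le] at h1
  rw [Int.ceil_le, Int.le_floor, div_le_iff₀ hm', le_div_iff₀ hm']
  constructor <;> linarith

/-- A finite set of rational points filling the ball `B(x, r)` at mesh `m`, with cardinality bounds
on the whole set and on its intersection with any ball. -/
lemma exists_grid {d : ℕ} {m : ℚ} (hm : 0 < m) (x : Euc d) {r : ℝ} (hr : 0 ≤ r) :
    ∃ Q : Finset (Euc d), (∀ q ∈ Q, RatPt q ∧ dist q x < r) ∧
      (∀ z, dist z x + d * m < r → ∃ q ∈ Q, dist z q ≤ d * m) ∧
      ((Q.card : ℝ) ≤ (2 * r / m + 1) ^ d) ∧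
      ∀ y, ∀ R : ℝ, 0 ≤ R → (((Q.filter fun q => dist q y < R).card : ℝ) ≤ (2 * R / m + 1) ^ d) := by
  classical
  have hm' : (0 : ℝ) < m := by exact_mod_cast hm
  set Q : Finset (Euc d) := ((gridBox m x r).image (gridPt m)).filter fun q => dist q x < r with hQ
  refine ⟨Q, ?_, ?_, ?_, ?_⟩
  · intro q hq
    obtain ⟨hq1, hq2⟩ := Finset.mem_filter.1 hq
    obtain ⟨k, _, rfl⟩ := Finset.mem_image.1 hq1
    exact ⟨fun j => ⟨m * k j, by simp [gridPt]⟩, hq2⟩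
  · intro z hz
    have hzq : dist z (gridPt m fun j => ⌊z j / m⌋) ≤ d * m := by
      refine dist_le_card_mul _ _ hm'.le fun j => ?_
      have h2 : (gridPt m fun j => ⌊z j / m⌋) j = (m : ℝ) * (⌊z j / m⌋ : ℝ) := rfl
      have h3 := Int.floor_le (z j / m)
      have h4 := (Int.lt_floor_add_one (z j / m)).le
      rw [le_div_iff₀ hm'] at h3
      rw [div_le_iff₀ hm'] at h4
      rw [h2, abs_le]
      constructor <;> nlinarith
    have hlt : dist (gridPt m fun j => ⌊z j / m⌋) x < r := by
      have := dist_triangle_left (gridPt m fun j => ⌊z j / m⌋) x z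
      linarith
    exact ⟨_, Finset.mem_filter.2 ⟨Finset.mem_image_of_mem _ (mem_gridBox hm hlt.le), hlt⟩, hzq⟩
  · refine le_trans ?_ (card_gridBox_le hm x hr)
    exact_mod_cast (Finset.card_filter_le _ _).trans Finset.card_image_le
  · intro y R hR
    refine le_trans ?_ (card_gridBox_le hm y hR)
    refine Nat.cast_le.2 (le_trans (Finset.card_le_card ?_)
      (Finset.card_image_le (f := gridPt m)))
    intro q hq
    obtain ⟨hq1, hq2⟩ := Finset.mem_filter.1 hq
    obtain ⟨k, _, rfl⟩ := Finset.mem_image.1 (Finset.mem_filter.1 hq1).1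
    exact Finset.mem_image_of_mem _ (mem_gridBox hm hq2.le)

/-! ### Greedy exhaustion of a finite set by separated subsets -/

lemma exists_maximal_separated {E : Type*} [PseudoMetricSpace E] (R : Finset E) (a : ℝ) :
    ∃ F ⊆ R, (∀ p ∈ F, ∀ q ∈ F, p ≠ q → a ≤ dist p q) ∧
      ∀ p ∈ R, p ∉ F → ∃ q ∈ F, dist p q < a := by
  classical
  set S := R.powerset.filter fun F => ∀ p ∈ F, ∀ q ∈ F, p ≠ q → a ≤ dist p q with hS
  have hne : S.Nonempty := ⟨∅, by simp [hS]⟩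
  obtain ⟨F, hFS, hmax⟩ := Finset.exists_max_image S Finset.card hne
  obtain ⟨hFR, hsep⟩ := Finset.mem_filter.1 hFS
  rw [Finset.mem_powerset] at hFR
  refine ⟨F, hFR, hsep, fun p hp hpF => ?_⟩
  by_contra! hcon
  have hins : insert p F ∈ S := by
    refine Finset.mem_filter.2 ⟨Finset.mem_powerset.2 (Finset.insert_subset hp hFR), ?_⟩
    intro u hu v hv huv
    rcases Finset.mem_insert.1 hu with rfl | hu' <;> rcases Finset.mem_insert.1 hv with rfl | hv'
    · exact absurd rfl huv
    · exact hcon v hv'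
    · rw [dist_comm]
      exact hcon u hu'
    · exact hsep u hu' v hv' huv
  have := hmax _ hins
  rw [Finset.card_insert_of_notMem hpF] at this
  omega

/-- Suppose `t` selects a point from every separated nonempty subset of `Q`, and every ball of
radius `a` around a point of `Q` has at most `D` points of `Q`. Offering to `t` maximal separated
subsets of what has not been selected yet, one forces `t` to select every point of `R ⊆ Q`. If `j`
points remain, the offered set has at least `j / D` points; hence the harmonic sum. -/
lemma exists_greedy_family {E : Type*} [PseudoMetricSpace E] (Q : Finset E) {a : ℝ} {D : ℕ}
    (ha : 0 < a)
    (hD : ∀ y ∈ Q, (Q.filter fun q => dist q y < a).card ≤ D) (t : Finset E → E)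
    (ht : ∀ F ⊆ Q, F.Nonempty → (∀ p ∈ F, ∀ q ∈ F, p ≠ q → a ≤ dist p q) → t F ∈ F) :
    ∀ n : ℕ, ∀ R ⊆ Q, R.card = n → ∃ 𝓕 : Finset (Finset E),
      (∀ F ∈ 𝓕, F ⊆ Q ∧ F.Nonempty ∧ ∀ p ∈ F, ∀ q ∈ F, p ≠ q → a ≤ dist p q) ∧
      (∀ q ∈ R, ∃ F ∈ 𝓕, t F = q) ∧
      ∑ F ∈ 𝓕, ((F.card : ℝ))⁻¹ ≤ D * (harmonic n : ℝ) := by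
  classical
  intro n
  induction n with
  | zero =>
    intro R _ hR
    rw [Finset.card_eq_zero] at hR
    exact ⟨∅, by simp, by simp [hR], by simp⟩
  | succ n ih =>
    intro R hRQ hR
    obtain ⟨F, hFR, hsep, hcov⟩ := exists_maximal_separated R a
    have hsub : R ⊆ F.biUnion fun y => Q.filter fun q => dist q y < a := by
      intro p hp
      by_cases hpF : p ∈ F
      · exact Finset.mem_biUnion.2 ⟨p, hpF, Finset.mem_filter.2 ⟨hRQ hp, by simpa using ha⟩⟩
      · obtain ⟨q, hq, hpq⟩ := hcov p hp hpF
        exact Finset.mem_biUnion.2 ⟨q, hq, Finset.mem_filter.2 ⟨hRQ hp, hpq⟩⟩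
    have hcard : n + 1 ≤ F.card * D := by
      rw [← hR]
      exact (Finset.card_le_card hsub).trans
        (Finset.card_biUnion_le_card_mul _ _ _ fun y hy => hD y (hRQ (hFR hy)))
    have hFne : F.Nonempty := by
      rw [← Finset.card_pos]
      by_contra! h
      simp [Nat.le_zero.1 h] at hcard
    have htF := ht F (hFR.trans hRQ) hFne hsep
    obtain ⟨𝓕, h1, h2, h3⟩ := ih (R.erase (t F)) ((Finset.erase_subset _ _).trans hRQ)
      (by rw [Finset.card_erase_of_mem (hFR htF), hR]; rfl)
    refine ⟨insert F 𝓕, ?_, ?_, ?_⟩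
    · intro G hG
      rcases Finset.mem_insert.1 hG with rfl | hG
      · exact ⟨hFR.trans hRQ, hFne, hsep⟩
      · exact h1 G hG
    · intro q hq
      by_cases hqt : q = t F
      · exact ⟨F, Finset.mem_insert_self _ _, hqt.symm⟩
      · obtain ⟨G, hG, hGq⟩ := h2 q (Finset.mem_erase.2 ⟨hqt, hq⟩)
        exact ⟨G, Finset.mem_insert_of_mem hG, hGq⟩
    · have hle : ∑ G ∈ insert F 𝓕, ((G.card : ℝ))⁻¹ ≤ (F.card : ℝ)⁻¹ + ∑ G ∈ 𝓕, ((G.card : ℝ))⁻¹ := by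
        by_cases hF : F ∈ 𝓕
        · rw [Finset.insert_eq_of_mem hF]
          have : (0 : ℝ) ≤ (F.card : ℝ)⁻¹ := by positivity
          linarith
        · rw [Finset.sum_insert hF]
      have hFpos : (0 : ℝ) < F.card := by exact_mod_cast hFne.card_pos
      have hinv : (F.card : ℝ)⁻¹ ≤ D * ((n : ℝ) + 1)⁻¹ := by
        rw [← div_eq_mul_inv, le_div_iff₀ (by positivity), inv_mul_le_iff₀ hFpos]
        exact_mod_cast hcard
      rw [harmonic_succ]
      push_cast
      rw [mul_add]
      linarith

end HDGame

namespace HDGame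

/-! ### Runs against a strategy of player II -/

/-- The position after `n` rounds when player I plays `F 0, F 1, …` and player II follows `τ`. -/
def histOf {d : ℕ} (τ : StratII d) (F : ℕ → Finset (Euc d)) :
    ℕ → List (Finset (Euc d) × Euc d)
  | 0 => []
  | n + 1 => histOf τ F n ++ [(F n, τ (histOf τ F n) (F n))]

/-- The `n`-th answer of `τ` when player I plays `F 0, F 1, …`. -/
def reply {d : ℕ} (τ : StratII d) (F : ℕ → Finset (Euc d)) (n : ℕ) : Euc d :=
  τ (histOf τ F n) (F n)

lemma hist_reply {d : ℕ} (τ : StratII d) (F : ℕ → Finset (Euc d)) (n : ℕ) :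
    hist F (reply τ F) n = histOf τ F n := by
  induction n with
  | zero => simp [hist, histOf]
  | succ n ih =>
    have : hist F (reply τ F) (n + 1) = hist F (reply τ F) n ++ [(F n, reply τ F n)] := by
      unfold hist
      rw [List.ofFn_succ_last]
      rfl
    rw [this, ih]
    rfl

lemma consistent_reply {d : ℕ} (τ : StratII d) (F : ℕ → Finset (Euc d)) :
    ConsistentII τ F (reply τ F) := by
  intro n
  rw [hist_reply]
  rfl

lemma histOf_congr {d : ℕ} (τ : StratII d) {F G : ℕ → Finset (Euc d)} {n : ℕ}
    (h : ∀ i < n, F i = G i) : histOf τ F n = histOf τ G n := by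
  induction n with
  | zero => rfl
  | succ n ih =>
    simp only [histOf]
    rw [ih fun i hi => h i (by omega), h n (by omega)]

lemma reply_congr {d : ℕ} (τ : StratII d) {F G : ℕ → Finset (Euc d)} {n : ℕ}
    (h : ∀ i ≤ n, F i = G i) : reply τ F n = reply τ G n := by
  unfold reply
  rw [histOf_congr τ fun i hi => h i hi.le, h n le_rfl]

/-- `F` is a legal sequence of moves of player I against `τ` up to round `n` (inclusive). -/
def LegalMoves {d : ℕ} (ρ₀ : ℝ) (β : ℕ → ℝ) (τ : StratII d) (F : ℕ → Finset (Euc d))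
    (n : ℕ) : Prop :=
  LegalThrough ρ₀ β F (reply τ F) n

lemma LegalMoves.update_succ {d : ℕ} {ρ₀ : ℝ} {β : ℕ → ℝ} {τ : StratII d}
    {F : ℕ → Finset (Euc d)} {n : ℕ} (h : LegalMoves ρ₀ β τ F n) {G : Finset (Euc d)}
    (hG : LegalSet ρ₀ β (n + 1) G)
    (hball : ∀ p ∈ G, p ∈ ball (reply τ F n) ((1 - β n) * ρ ρ₀ β n)) :
    LegalMoves ρ₀ β τ (Function.update F (n + 1) G) (n + 1) := by
  have hold : ∀ i ≤ n, Function.update F (n + 1) G i = F i := fun i hi =>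
    Function.update_of_ne (by omega) _ _
  have hrep : ∀ i ≤ n, reply τ (Function.update F (n + 1) G) i = reply τ F i := fun i hi =>
    reply_congr τ fun j hj => hold j (hj.trans hi)
  refine ⟨fun i hi => ?_, fun i hi => ?_⟩
  · rcases Nat.lt_or_ge n i with hlt | hle
    · obtain rfl : i = n + 1 := by omega
      rwa [Function.update_self]
    · rw [hold i hle]
      exact h.1 i hle
  · rw [hrep i (by omega)]
    rcases Nat.lt_or_ge i n with hlt | hle
    · rw [hold (i + 1) (by omega)]
      exact h.2 i hlt
    · obtain rfl : i = n := by omega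
      rwa [Function.update_self]

lemma ρ_pos {d : ℕ} {ρ₀ : ℝ} {β : ℕ → ℝ} (hpar : Params d ρ₀ β) (n : ℕ) : 0 < ρ ρ₀ β n :=
  mul_pos (Finset.prod_pos fun i _ => hpar.hβpos i) hpar.hρ₀

lemma ρ_succ (ρ₀ : ℝ) (β : ℕ → ℝ) (n : ℕ) : ρ ρ₀ β (n + 1) = β n * ρ ρ₀ β n := by
  unfold ρ
  rw [Finset.prod_range_succ]
  ring

/-- The bound on the branching of one round: with `b = β n`, the moves considered after a
position of `n + 1` rounds satisfy `∑ 1 / |F| ≤ branchBound d b`. -/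
def branchBound (d : ℕ) (b : ℝ) : ℝ :=
  (48 * d + 1) ^ d * (1 + d * Real.log (9 * d / b))

/-- From a legal position with last point `x`, finitely many moves of player I suffice to make
the answer of player II come close to any prescribed point near `x`, and the sum of the
reciprocals of their sizes is only logarithmic in `1 / β n`. -/
lemma exists_moves {d : ℕ} {ρ₀ : ℝ} {β : ℕ → ℝ} (hpar : Params d ρ₀ β) {τ : StratII d}
    (hτ : ∀ F n, LegalMoves ρ₀ β τ F n → reply τ F n ∈ F n)
    {F : ℕ → Finset (Euc d)} {n : ℕ} (hF : LegalMoves ρ₀ β τ F n) :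
    ∃ 𝓕 : Finset (Finset (Euc d)),
      (∀ G ∈ 𝓕, LegalMoves ρ₀ β τ (Function.update F (n + 1) G) (n + 1)) ∧
      (∀ z, dist z (reply τ F n) < ρ ρ₀ β n / 4 →
        ∃ G ∈ 𝓕, dist z (reply τ (Function.update F (n + 1) G) (n + 1)) < ρ ρ₀ β (n + 1) / 4) ∧
      ∑ G ∈ 𝓕, ((G.card : ℝ))⁻¹ ≤ branchBound d (β n) := by
  have hd : (1 : ℝ) ≤ d := by exact_mod_cast hpar.hd
  have hr := ρ_pos hpar n
  have hr' := ρ_pos hpar (n + 1)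
  have hb := hpar.hβpos n
  have hb2 := hpar.hβhalf n
  have hs := ρ_succ ρ₀ β n
  set r := ρ ρ₀ β n
  set r' := ρ ρ₀ β (n + 1)
  set b := β n
  set x := reply τ F n
  have hr'r : r' ≤ r / 2 := by rw [hs]; nlinarith
  obtain ⟨m, hm1, hm2⟩ := exists_rat_btwn (show r' / (8 * d) < r' / (4 * d) from
    div_lt_div_of_pos_left hr' (by positivity) (by linarith))
  have hm' : (0 : ℝ) < m := lt_trans (by positivity) hm1
  have hm : 0 < m := by exact_mod_cast hm'
  have hdm : (d : ℝ) * m < r' / 4 := by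
    rw [lt_div_iff₀ (by positivity)] at hm2
    linarith
  have hdm' : r' < 8 * d * m := by
    rw [div_lt_iff₀ (by positivity)] at hm1
    linarith
  obtain ⟨Q, hQ1, hQ2, hQ3, hQ4⟩ := exists_grid hm x (show (0 : ℝ) ≤ r / 2 by positivity)
  have hlegal : ∀ G ⊆ Q, G.Nonempty → (∀ p ∈ G, ∀ q ∈ G, p ≠ q → 3 * r' ≤ dist p q) →
      LegalMoves ρ₀ β τ (Function.update F (n + 1) G) (n + 1) := by
    intro G hGQ hGne hGsep
    refine hF.update_succ ⟨hGne, fun p hp => (hQ1 p (hGQ hp)).1, hGsep⟩ fun p hp => ?_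
    have := (hQ1 p (hGQ hp)).2
    rw [mem_ball]
    change dist p x < (1 - b) * r
    nlinarith
  have hD : ∀ y ∈ Q, (Q.filter fun q => dist q y < 3 * r').card ≤ (48 * d + 1) ^ d := by
    intro y _
    have h1 := hQ4 y (3 * r') (by positivity)
    have h2 : 2 * (3 * r') / m + 1 ≤ 48 * d + 1 := by
      rw [add_le_add_iff_right, div_le_iff₀ hm']
      linarith
    have h3 : (2 * (3 * r') / m + 1) ^ d ≤ (48 * (d : ℝ) + 1) ^ d :=
      pow_le_pow_left₀ (by positivity) h2 d
    exact_mod_cast h1.trans h3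
  obtain ⟨𝓕, h1, h2, h3⟩ := exists_greedy_family Q (show 0 < 3 * r' by positivity) hD
    (fun G => reply τ (Function.update F (n + 1) G) (n + 1))
    (by
      intro G hGQ hGne hGsep
      simpa using hτ _ _ (hlegal G hGQ hGne hGsep)) Q.card Q subset_rfl rfl
  refine ⟨𝓕, fun G hG => hlegal G (h1 G hG).1 (h1 G hG).2.1 (h1 G hG).2.2, ?_, h3.trans ?_⟩
  · intro z hz
    obtain ⟨q, hq, hzq⟩ := hQ2 z (by linarith)
    obtain ⟨G, hG, hGq⟩ := h2 q hq
    refine ⟨G, hG, ?_⟩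
    rw [hGq]
    linarith
  · unfold branchBound
    push_cast
    refine mul_le_mul_of_nonneg_left ?_ (by positivity)
    refine (harmonic_le_one_add_log _).trans ?_
    have hbig : (1 : ℝ) ≤ 9 * d / b := by
      rw [le_div_iff₀ hb]
      linarith
    have hbase : 2 * (r / 2) / m + 1 ≤ 9 * d / b := by
      have e1 : 2 * (r / 2) / m ≤ 8 * d / b := by
        rw [div_le_div_iff₀ hm' hb]
        have : r * b = r' := by rw [hs]; ring
        linarith
      have e2 : 1 ≤ d / b := by
        rw [le_div_iff₀ hb]
        linarith
      have e3 : 9 * d / b = 8 * d / b + d / b := by ring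
      linarith
    have hlog : Real.log (Q.card : ℝ) ≤ d * Real.log (9 * d / b) := by
      rcases Nat.eq_zero_or_pos Q.card with h0 | h0
      · rw [h0]
        simp only [Nat.cast_zero, Real.log_zero]
        exact mul_nonneg (by positivity) (Real.log_nonneg hbig)
      · rw [← Real.log_pow]
        refine Real.log_le_log (by exact_mod_cast h0) (hQ3.trans ?_)
        exact pow_le_pow_left₀ (by positivity) hbase d
    linarith

/-! ### The tree of positions -/

/-- The weight `∏_{i < n} 1 / |F i|` of a sequence of moves. -/
def weight {d : ℕ} (F : ℕ → Finset (Euc d)) (n : ℕ) : ℝ :=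
  (∏ i ∈ Finset.range n, ((F i).card : ℝ))⁻¹

lemma weight_nonneg {d : ℕ} (F : ℕ → Finset (Euc d)) (n : ℕ) : 0 ≤ weight F n :=
  inv_nonneg.2 (Finset.prod_nonneg fun _ _ => Nat.cast_nonneg _)

lemma weight_congr {d : ℕ} {F G : ℕ → Finset (Euc d)} {n : ℕ} (h : ∀ i < n, F i = G i) :
    weight F n = weight G n := by
  unfold weight
  rw [Finset.prod_congr rfl fun i hi => by rw [h i (Finset.mem_range.1 hi)]]

lemma weight_update_succ {d : ℕ} (F : ℕ → Finset (Euc d)) (n : ℕ) (G : Finset (Euc d)) :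
    weight (Function.update F (n + 1) G) (n + 2) = weight F (n + 1) * ((G.card : ℝ))⁻¹ := by
  have h : weight (Function.update F (n + 1) G) (n + 1) = weight F (n + 1) :=
    weight_congr fun i hi => Function.update_of_ne (by omega) _ _
  rw [← h]
  unfold weight
  rw [Finset.prod_range_succ, Function.update_self, mul_inv]

lemma sum_image_le_sum {ι κ : Type*} [DecidableEq κ] (s : Finset ι) (g : ι → κ) (f : κ → ℝ)
    (hf : ∀ k, 0 ≤ f k) : ∑ k ∈ s.image g, f k ≤ ∑ i ∈ s, f (g i) := by
  rw [← Finset.sum_fiberwise_of_maps_to (t := s.image g) (g := g)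
    (fun i hi => Finset.mem_image_of_mem g hi)]
  refine Finset.sum_le_sum fun k hk => ?_
  obtain ⟨i, hi, rfl⟩ := Finset.mem_image.1 hk
  exact Finset.single_le_sum (f := fun j => f (g j)) (fun j _ => hf _)
    (Finset.mem_filter.2 ⟨hi, rfl⟩)

lemma branchBound_nonneg {d : ℕ} {b : ℝ} (hd : 1 ≤ d) (hb : 0 < b) (hb1 : b < 1) :
    0 ≤ branchBound d b := by
  have hd' : (1 : ℝ) ≤ d := by exact_mod_cast hd
  have : 0 ≤ Real.log (9 * d / b) := Real.log_nonneg (by rw [le_div_iff₀ hb]; linarith)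
  unfold branchBound
  positivity

/-- Starting from the move `{q}`, there are finite sets `P n` of legal positions of `n + 1` rounds
such that every point near `q` is followed by an infinite branch, while the total weight of `P n`
is bounded by the product of the branching bounds. -/
lemma exists_tree {d : ℕ} {ρ₀ : ℝ} {β : ℕ → ℝ} (hpar : Params d ρ₀ β) {τ : StratII d}
    (hτ : ∀ F n, LegalMoves ρ₀ β τ F n → reply τ F n ∈ F n) {q : Euc d} (hq : RatPt q) :
    ∃ P : ℕ → Finset (ℕ → Finset (Euc d)),
      (∀ n, ∑ F ∈ P n, weight F (n + 1) ≤ ∏ i ∈ Finset.range n, branchBound d (β i)) ∧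
      ∀ z, dist z q < ρ₀ / 4 → ∃ F : ℕ → Finset (Euc d), ∀ n,
        LegalMoves ρ₀ β τ F n ∧ dist z (reply τ F n) < ρ ρ₀ β n / 4 ∧
        ∃ G ∈ P n, ∀ i ≤ n, G i = F i := by
  classical
  have hex : ∀ n F, ∃ 𝓕 : Finset (Finset (Euc d)), LegalMoves ρ₀ β τ F n →
      (∀ G ∈ 𝓕, LegalMoves ρ₀ β τ (Function.update F (n + 1) G) (n + 1)) ∧
      (∀ z, dist z (reply τ F n) < ρ ρ₀ β n / 4 →
        ∃ G ∈ 𝓕, dist z (reply τ (Function.update F (n + 1) G) (n + 1)) < ρ ρ₀ β (n + 1) / 4) ∧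
      ∑ G ∈ 𝓕, ((G.card : ℝ))⁻¹ ≤ branchBound d (β n) := by
    intro n F
    by_cases h : LegalMoves ρ₀ β τ F n
    · obtain ⟨𝓕, h𝓕⟩ := exists_moves hpar hτ h
      exact ⟨𝓕, fun _ => h𝓕⟩
    · exact ⟨∅, fun h' => absurd h' h⟩
  choose 𝓕 h𝓕 using hex
  set P : ℕ → Finset (ℕ → Finset (Euc d)) := fun n => Nat.rec {fun _ => {q}}
    (fun n Pn => (Pn.sigma (𝓕 n)).image fun a => Function.update a.1 (n + 1) a.2) n with hP
  have hP0 : P 0 = {fun _ => {q}} := rfl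
  have hPs : ∀ n, P (n + 1) =
      ((P n).sigma (𝓕 n)).image fun a => Function.update a.1 (n + 1) a.2 := fun n => rfl
  have hlegal0 : LegalMoves ρ₀ β τ (fun _ => {q}) 0 := by
    refine ⟨fun i hi => ⟨Finset.singleton_nonempty q, ?_, ?_⟩, fun i hi => absurd hi (by omega)⟩
    · intro p hp
      rw [Finset.mem_singleton.1 hp]
      exact hq
    · intro p hp p' hp' hne
      rw [Finset.mem_singleton.1 hp, Finset.mem_singleton.1 hp'] at hne
      exact absurd rfl hne
  have hlegal : ∀ n, ∀ F ∈ P n, LegalMoves ρ₀ β τ F n := by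
    intro n
    induction n with
    | zero =>
      intro F hF
      rw [hP0, Finset.mem_singleton] at hF
      rw [hF]
      exact hlegal0
    | succ n ih =>
      intro F hF
      rw [hPs, Finset.mem_image] at hF
      obtain ⟨⟨F', G⟩, ha, rfl⟩ := hF
      obtain ⟨ha1, ha2⟩ := Finset.mem_sigma.1 ha
      exact (h𝓕 n F' (ih F' ha1)).1 G ha2
  refine ⟨P, fun n => ?_, fun z hz => ?_⟩
  · induction n with
    | zero => simp [hP0, weight]
    | succ n ih =>
      rw [hPs]
      refine (sum_image_le_sum _ _ _ fun F => weight_nonneg F _).trans ?_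
      rw [Finset.sum_sigma, Finset.prod_range_succ]
      calc _ = ∑ F ∈ P n, weight F (n + 1) * ∑ G ∈ 𝓕 n F, ((G.card : ℝ))⁻¹ := by
            refine Finset.sum_congr rfl fun F _ => ?_
            rw [Finset.mul_sum]
            exact Finset.sum_congr rfl fun G _ => weight_update_succ F n G
        _ ≤ ∑ F ∈ P n, weight F (n + 1) * branchBound d (β n) :=
            Finset.sum_le_sum fun F hF => mul_le_mul_of_nonneg_left
              (h𝓕 n F (hlegal n F hF)).2.2 (weight_nonneg F _)
        _ ≤ _ := by
            rw [← Finset.sum_mul]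
            refine mul_le_mul_of_nonneg_right ih
              (branchBound_nonneg hpar.hd (hpar.hβpos n) ?_)
            linarith [hpar.hβhalf n]
  · have hbase : dist z (reply τ (fun _ => {q}) 0) < ρ ρ₀ β 0 / 4 := by
      have h1 := hτ _ _ hlegal0
      rw [Finset.mem_singleton] at h1
      rw [h1]
      simpa [ρ] using hz
    have hstep : ∀ n (F : ℕ → Finset (Euc d)), F ∈ P n ∧ dist z (reply τ F n) < ρ ρ₀ β n / 4 →
        ∃ F' : ℕ → Finset (Euc d), (F' ∈ P (n + 1) ∧
          dist z (reply τ F' (n + 1)) < ρ ρ₀ β (n + 1) / 4) ∧ ∀ i ≤ n, F' i = F i := by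
      rintro n F ⟨hF, hFz⟩
      obtain ⟨G, hG, hGz⟩ := (h𝓕 n F (hlegal n F hF)).2.1 z hFz
      refine ⟨Function.update F (n + 1) G, ⟨?_, hGz⟩, fun i hi =>
        Function.update_of_ne (by omega) _ _⟩
      rw [hPs]
      exact Finset.mem_image.2 ⟨⟨F, G⟩, Finset.mem_sigma.2 ⟨hF, hG⟩, rfl⟩
    choose! next hnext1 hnext2 using hstep
    set B : ℕ → (ℕ → Finset (Euc d)) := fun n => Nat.rec (fun _ => {q}) next n with hB
    have hBs : ∀ n, B (n + 1) = next n (B n) := fun n => rfl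
    have hBP : ∀ n, B n ∈ P n ∧ dist z (reply τ (B n) n) < ρ ρ₀ β n / 4 := by
      intro n
      induction n with
      | zero => exact ⟨Finset.mem_singleton_self _, hbase⟩
      | succ n ih => exact hnext1 n (B n) ih
    have hagree : ∀ n, ∀ i ≤ n, B n i = B i i := by
      intro n
      induction n with
      | zero =>
        intro i hi
        rw [Nat.le_zero.1 hi]
      | succ n ih =>
        intro i hi
        rcases Nat.lt_or_ge n i with hlt | hle
        · obtain rfl : i = n + 1 := by omega
          rfl
        · rw [hBs, hnext2 n (B n) (hBP n) i hle, ih i hle]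
    refine ⟨fun n => B n n, fun n => ?_⟩
    have hrep : ∀ i ≤ n, reply τ (B n) i = reply τ (fun n => B n n) i := fun i hi =>
      reply_congr τ fun j hj => hagree n j (hj.trans hi)
    have hl := hlegal n (B n) (hBP n).1
    refine ⟨⟨fun i hi => ?_, fun i hi p hp => ?_⟩, ?_, B n, (hBP n).1, hagree n⟩
    · have := hl.1 i hi
      rwa [hagree n i hi] at this
    · have := hl.2 i hi
      rw [hagree n (i + 1) (by omega), hrep i (by omega)] at this
      exact this p hp
    · rw [← hrep n le_rfl]
      exact (hBP n).2

end HDGame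

namespace HDGame

/-! ### Hausdorff measure of limsup sets -/

/-- A set contained in the limsup of finite unions of balls with summable `s`-th powers of the
diameters has finite `s`-dimensional Hausdorff measure. -/
lemma hausdorffMeasure_ne_top_of_frequently {X : Type*} [MetricSpace X] [MeasurableSpace X]
    [BorelSpace X] {E : Set X} {s : ℝ} (hs : 0 ≤ s) {r : ℕ → ℝ} (hr0 : ∀ n, 0 ≤ r n)
    (hanti : Antitone r) (hlim : Tendsto r atTop (𝓝 0)) (U : ℕ → Finset X) {K : ℝ}
    (hK : ∀ᶠ n in atTop, ((U n).card : ℝ) * (2 * r n) ^ s ≤ K * (1 / 2) ^ n)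
    (hE : ∀ z ∈ E, ∃ᶠ n in atTop, ∃ c ∈ U n, dist z c < r n) : μH[s] E ≠ ∞ := by
  have hdiam : ∀ (c : X) n, ediam (ball c (r n)) ≤ ENNReal.ofReal (2 * r n) := by
    intro c n
    refine ediam_le fun x hx y hy => ?_
    rw [edist_dist]
    refine ENNReal.ofReal_le_ofReal ?_
    have := dist_triangle_right x y c
    rw [mem_ball] at hx hy
    linarith
  have hlim2 : Tendsto (fun N => ENNReal.ofReal (2 * r N)) atTop (𝓝 0) := by
    have := ENNReal.tendsto_ofReal (hlim.const_mul 2)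
    simpa using this
  have hmain := Measure.hausdorffMeasure_le_liminf_tsum (l := atTop) (ι := fun N : ℕ =>
    Σ k : ℕ, {c // c ∈ U (N + k)}) s E (fun N => ENNReal.ofReal (2 * r N)) hlim2
    (fun N a => ball a.2.1 (r (N + a.1)))
    (Eventually.of_forall fun N a => (hdiam _ _).trans (ENNReal.ofReal_le_ofReal
      (mul_le_mul_of_nonneg_left (hanti (Nat.le_add_right N a.1)) zero_le_two)))
    (Eventually.of_forall fun N z hz => by
      obtain ⟨n, hn, c, hc, hzc⟩ := frequently_atTop.1 (hE z hz) N
      obtain ⟨k, rfl⟩ := Nat.exists_eq_add_of_le hn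
      exact mem_iUnion.2 ⟨⟨k, c, hc⟩, hzc⟩)
  refine ne_top_of_le_ne_top (ENNReal.ofReal_ne_top (r := |K| * 2)) (hmain.trans ?_)
  refine liminf_le_of_frequently_le' (Eventually.frequently ?_)
  obtain ⟨N₀, hN₀⟩ := eventually_atTop.1 hK
  filter_upwards [eventually_ge_atTop N₀] with N hN
  rw [ENNReal.tsum_sigma']
  have hgeo : HasSum (fun k : ℕ => |K| * (1 / 2 : ℝ) ^ k) (|K| * 2) :=
    hasSum_geometric_two.mul_left _
  calc _ ≤ ∑' k : ℕ, ENNReal.ofReal (|K| * (1 / 2 : ℝ) ^ k) := by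
        refine ENNReal.tsum_le_tsum fun k => ?_
        calc _ ≤ ∑' _ : {c // c ∈ U (N + k)}, ENNReal.ofReal (2 * r (N + k)) ^ s :=
              ENNReal.tsum_le_tsum fun c => ENNReal.rpow_le_rpow (hdiam _ _) hs
          _ = ENNReal.ofReal (((U (N + k)).card : ℝ) * (2 * r (N + k)) ^ s) := by
              rw [tsum_fintype, Finset.sum_const, Finset.card_univ, Fintype.card_coe,
                nsmul_eq_mul, ENNReal.ofReal_mul (Nat.cast_nonneg _), ENNReal.ofReal_natCast,
                ENNReal.ofReal_rpow_of_nonneg (mul_nonneg zero_le_two (hr0 _)) hs]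
          _ ≤ _ := by
              refine ENNReal.ofReal_le_ofReal ((hN₀ (N + k) (by omega)).trans ?_)
              refine mul_le_mul (le_abs_self K) ?_ (by positivity) (abs_nonneg K)
              exact pow_le_pow_of_le_one (by norm_num) (by norm_num) (by omega)
    _ = ENNReal.ofReal (|K| * 2) := by
        rw [← ENNReal.ofReal_tsum_of_nonneg (fun k => by positivity) hgeo.summable, hgeo.tsum_eq]

/-! ### Size estimates -/

lemma tendsto_branchBound_mul_rpow (d : ℕ) (hd : 1 ≤ d) {ε : ℝ} (hε : 0 < ε) :
    Tendsto (fun b : ℝ => branchBound d b * b ^ ε) (𝓝[>] 0) (𝓝 0) := by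
  have hd' : (1 : ℝ) ≤ d := by exact_mod_cast hd
  have h1 : Tendsto (fun b : ℝ => b ^ ε) (𝓝[>] 0) (𝓝 0) := by
    have := (Real.continuousAt_rpow_const 0 ε (Or.inr hε.le)).tendsto
    rw [Real.zero_rpow hε.ne'] at this
    exact this.mono_left nhdsWithin_le_nhds
  have h2 := tendsto_log_mul_rpow_nhdsGT_zero hε
  have h3 := ((h1.const_mul (1 + d * Real.log (9 * d))).sub (h2.const_mul (d : ℝ))).const_mul
    ((48 * (d : ℝ) + 1) ^ d)
  rw [mul_zero, mul_zero, sub_zero, mul_zero] at h3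
  refine h3.congr' ?_
  filter_upwards [self_mem_nhdsWithin] with b hb
  unfold branchBound
  rw [Real.log_div (by positivity) (ne_of_gt hb)]
  ring

lemma eventually_prod_le_geometric {a : ℕ → ℝ} (ha : ∀ i, 0 ≤ a i)
    (hlim : Tendsto a atTop (𝓝 0)) :
    ∃ K : ℝ, ∀ᶠ n in atTop, ∏ i ∈ Finset.range n, a i ≤ K * (1 / 2) ^ n := by
  obtain ⟨N, hN⟩ := eventually_atTop.1 (hlim.eventually_le_const (show (0 : ℝ) < 1 / 2 by norm_num))
  refine ⟨(∏ i ∈ Finset.range N, a i) * 2 ^ N, eventually_atTop.2 ⟨N, fun n hn => ?_⟩⟩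
  induction n, hn using Nat.le_induction with
  | base =>
    rw [mul_assoc, ← mul_pow]
    norm_num
  | succ n hn ih =>
    rw [Finset.prod_range_succ, pow_succ, ← mul_assoc]
    exact mul_le_mul ih (hN n hn) (ha n)
      ((Finset.prod_nonneg fun i _ => ha i).trans ih)

/-- The slow decay of `β` absorbs the factor `β n ^ (-δ)`, which arises because the `n + 1` sets
played so far are compared with `∏_{i ≤ n} β i ^ δ` whereas the current radius is only `ρ n`. -/
lemma exists_cover_bound {d : ℕ} {ρ₀ : ℝ} {β : ℕ → ℝ} (hpar : Params d ρ₀ β) {δ s : ℝ}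
    (hδ : 0 < δ) (hs : δ < s) :
    ∃ K : ℝ, ∀ᶠ n in atTop, (∏ i ∈ Finset.range n, branchBound d (β i)) /
      (∏ i ∈ Finset.range (n + 1), β i ^ δ) * (2 * (ρ ρ₀ β n / 4)) ^ s ≤ K * (1 / 2) ^ n := by
  have hβ := hpar.hβpos
  have hρ₀ := hpar.hρ₀
  set ε := (s - δ) / 2 with hε
  have hεpos : 0 < ε := by rw [hε]; linarith
  have hL : ∀ i, 0 ≤ branchBound d (β i) := fun i =>
    branchBound_nonneg hpar.hd (hβ i) (by linarith [hpar.hβhalf i])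
  have hβ' : Tendsto β atTop (𝓝[>] 0) :=
    tendsto_nhdsWithin_iff.2 ⟨hpar.hβlim, Eventually.of_forall hβ⟩
  obtain ⟨K, hK⟩ := eventually_prod_le_geometric
    (a := fun i => branchBound d (β i) * β i ^ ε)
    (fun i => mul_nonneg (hL i) (Real.rpow_nonneg (hβ i).le _))
    ((tendsto_branchBound_mul_rpow d hpar.hd hεpos).comp hβ')
  obtain ⟨n₀, hn₀⟩ := hpar.hβslow (ε / δ) (by positivity)
  refine ⟨(ρ₀ / 2) ^ s * K, ?_⟩
  filter_upwards [hK, eventually_ge_atTop n₀] with n hn hnn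
  have hprod : 0 < ∏ i ∈ Finset.range n, β i := Finset.prod_pos fun i _ => hβ i
  set p := ∏ i ∈ Finset.range n, β i with hp
  have hpow : ∀ e : ℝ, ∏ i ∈ Finset.range n, β i ^ e = p ^ e := fun e =>
    Real.finsetProd_rpow _ _ (fun i _ => (hβ i).le) e
  have hslow : p ^ ε ≤ β n ^ δ := by
    have h1 := hn₀ n hnn
    rw [hpow] at h1
    have h2 := Real.rpow_le_rpow (Real.rpow_nonneg hprod.le _) h1 hδ.le
    rwa [← Real.rpow_mul hprod.le, div_mul_cancel₀ _ hδ.ne'] at h2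
  have hrad : (2 * (ρ ρ₀ β n / 4)) ^ s = (ρ₀ / 2) ^ s * p ^ s := by
    rw [← Real.mul_rpow (by positivity) hprod.le]
    congr 1
    unfold ρ
    rw [← hp]
    ring
  rw [Finset.prod_range_succ, hpow, hrad]
  rw [Finset.prod_mul_distrib, hpow] at hn
  set Λ := ∏ i ∈ Finset.range n, branchBound d (β i) with hΛ
  have hΛ0 : 0 ≤ Λ := Finset.prod_nonneg fun i _ => hL i
  have hps : p ^ s = p ^ δ * p ^ ε * p ^ ε := by
    rw [← Real.rpow_add hprod, ← Real.rpow_add hprod]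
    congr 1
    rw [hε]
    ring
  have hβn : 0 < β n ^ δ := Real.rpow_pos_of_pos (hβ n) _
  have hpδ : 0 < p ^ δ := Real.rpow_pos_of_pos hprod _
  have hpε : 0 < p ^ ε := Real.rpow_pos_of_pos hprod _
  have hρs : 0 < (ρ₀ / 2) ^ s := Real.rpow_pos_of_pos (by positivity) _
  calc Λ / (p ^ δ * β n ^ δ) * ((ρ₀ / 2) ^ s * p ^ s)
      = (ρ₀ / 2) ^ s * (Λ * p ^ ε) * (p ^ ε / β n ^ δ) := by
        rw [hps]
        field_simp
    _ ≤ (ρ₀ / 2) ^ s * (Λ * p ^ ε) * 1 := by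
        refine mul_le_mul_of_nonneg_left ?_ (by positivity)
        exact (div_le_one hβn).2 hslow
    _ ≤ (ρ₀ / 2) ^ s * (K * (1 / 2) ^ n) := by
        rw [mul_one]
        exact mul_le_mul_of_nonneg_left hn hρs.le
    _ = _ := by ring

lemma ρ_antitone {d : ℕ} {ρ₀ : ℝ} {β : ℕ → ℝ} (hpar : Params d ρ₀ β) : Antitone (ρ ρ₀ β) := by
  refine antitone_nat_of_succ_le fun n => ?_
  rw [ρ_succ]
  nlinarith [ρ_pos hpar n, hpar.hβhalf n]

lemma tendsto_ρ {d : ℕ} {ρ₀ : ℝ} {β : ℕ → ℝ} (hpar : Params d ρ₀ β) :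
    Tendsto (ρ ρ₀ β) atTop (𝓝 0) := by
  have hle : ∀ n, ρ ρ₀ β n ≤ (1 / 2) ^ n * ρ₀ := by
    intro n
    induction n with
    | zero => simp [ρ]
    | succ n ih =>
      rw [ρ_succ, pow_succ]
      nlinarith [ρ_pos hpar n, hpar.hβhalf n]
  have hgeo : Tendsto (fun n : ℕ => (1 / 2 : ℝ) ^ n * ρ₀) atTop (𝓝 0) := by
    simpa using (tendsto_pow_atTop_nhds_zero_of_lt_one (r := (1 / 2 : ℝ)) (by norm_num)
      (by norm_num)).mul_const ρ₀
  exact squeeze_zero (fun n => (ρ_pos hpar n).le) hle hgeo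

/-! ### The part of `A` near a rational point -/

/-- Near a rational point, `A` lies in the limsup of the balls belonging to the positions of large
weight, because the branch of the tree following `z ∈ A` must violate the last rule. -/
lemma hausdorffMeasure_inter_ball_ne_top {d : ℕ} {ρ₀ : ℝ} {β : ℕ → ℝ} (hpar : Params d ρ₀ β)
    {δ s : ℝ} (hδ : 0 < δ) (hs : δ < s) {A : Set (Euc d)} {τ : StratII d}
    (hτ : WinsII ρ₀ β δ A τ) {q : Euc d} (hq : RatPt q) :
    μH[s] (A ∩ ball q (ρ₀ / 4)) ≠ ∞ := by
  classical
  have hlegal : ∀ F n, LegalMoves ρ₀ β τ F n → reply τ F n ∈ F n := fun F n h =>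
    (hτ F (reply τ F) (consistent_reply τ F)).1 n h
  obtain ⟨P, hPsum, hPbranch⟩ := exists_tree hpar hlegal hq
  set heavy : ℕ → Finset (ℕ → Finset (Euc d)) := fun n =>
    (P n).filter fun F => ∏ i ∈ Finset.range (n + 1), β i ^ δ < weight F (n + 1) with hheavy
  have hprod : ∀ n, 0 < ∏ i ∈ Finset.range n, β i ^ δ := fun n =>
    Finset.prod_pos fun i _ => Real.rpow_pos_of_pos (hpar.hβpos i) _
  have hcard : ∀ n, ((heavy n).card : ℝ) ≤ (∏ i ∈ Finset.range n, branchBound d (β i)) /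
      ∏ i ∈ Finset.range (n + 1), β i ^ δ := by
    intro n
    rw [le_div_iff₀ (hprod _)]
    calc ((heavy n).card : ℝ) * ∏ i ∈ Finset.range (n + 1), β i ^ δ
        = ∑ _F ∈ heavy n, ∏ i ∈ Finset.range (n + 1), β i ^ δ := by
          rw [Finset.sum_const, nsmul_eq_mul]
      _ ≤ ∑ F ∈ heavy n, weight F (n + 1) :=
          Finset.sum_le_sum fun F hF => (Finset.mem_filter.1 hF).2.le
      _ ≤ ∑ F ∈ P n, weight F (n + 1) :=
          Finset.sum_le_sum_of_subset_of_nonneg (Finset.filter_subset _ _)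
            fun F _ _ => weight_nonneg F _
      _ ≤ _ := hPsum n
  obtain ⟨K, hK⟩ := exists_cover_bound hpar hδ hs
  refine hausdorffMeasure_ne_top_of_frequently (hδ.trans hs).le (r := fun n => ρ ρ₀ β n / 4)
    (fun n => by have := ρ_pos hpar n; positivity)
    (fun m n h => div_le_div_of_nonneg_right (ρ_antitone hpar h) (by norm_num))
    (by simpa using (tendsto_ρ hpar).div_const 4)
    (fun n => (heavy n).image fun F => reply τ F n) (K := K) ?_ ?_
  · filter_upwards [hK] with n hn
    refine le_trans (mul_le_mul_of_nonneg_right ?_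
      (Real.rpow_nonneg (by have := ρ_pos hpar n; positivity) _)) hn
    exact le_trans (Nat.cast_le.2 Finset.card_image_le) (hcard n)
  · rintro z ⟨hzA, hzq⟩
    obtain ⟨F, hF⟩ := hPbranch z hzq
    have hlim : Tendsto (reply τ F) atTop (𝓝 z) := by
      rw [tendsto_iff_dist_tendsto_zero]
      refine squeeze_zero (fun _ => dist_nonneg) (fun n => ?_) (tendsto_ρ hpar)
      rw [dist_comm]
      linarith [(hF n).2.1, ρ_pos hpar n]
    have hnot : ¬ IRules ρ₀ β δ F (reply τ F) := fun h =>
      (hτ F (reply τ F) (consistent_reply τ F)).2 h z hlim hzA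
    have hfreq : ∃ᶠ n in atTop, ∏ i ∈ Finset.range n, β i ^ δ < weight F n := by
      by_contra hcon
      rw [not_frequently] at hcon
      refine hnot ⟨fun i => (hF i).1.1 i le_rfl, fun i => (hF (i + 1)).1.2 i (Nat.lt_succ_self i),
        1, one_pos, ?_⟩
      filter_upwards [hcon] with n hn
      rw [div_le_one (hprod n)]
      exact not_lt.1 hn
    rw [frequently_atTop] at hfreq ⊢
    intro N
    obtain ⟨n, hn, hnw⟩ := hfreq (N + 1)
    obtain ⟨m, rfl⟩ : ∃ m, n = m + 1 := ⟨n - 1, by omega⟩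
    obtain ⟨-, hdist, G, hGP, hGF⟩ := hF m
    refine ⟨m, by omega, reply τ G m, Finset.mem_image.2 ⟨G, Finset.mem_filter.2 ⟨hGP, ?_⟩, rfl⟩, ?_⟩
    · rw [weight_congr fun i hi => hGF i (Nat.lt_succ_iff.1 hi)]
      exact hnw
    · rw [reply_congr τ hGF]
      exact hdist

end HDGame

/-- If player II has a winning strategy in the `δ`-Hausdorff dimension game `G^δ_β̄(A)`,
then `dimH A ≤ δ`. -/
theorem playerII_wins_implies_dimH_le {d : ℕ} {ρ₀ : ℝ} {β : ℕ → ℝ}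
    (hpar : Params d ρ₀ β) {δ : ℝ} (hδ : 0 < δ) (hδd : δ ≤ (d : ℝ))
    (A : Set (Euc d)) (τ : StratII d) (hτ : WinsII ρ₀ β δ A τ) :
    dimH A ≤ ENNReal.ofReal δ := by
  have hd : (1 : ℝ) ≤ d := by exact_mod_cast hpar.hd
  have hρ₀ := hpar.hρ₀
  have hcover : A ⊆ ⋃ k : Fin d → ℚ,
      A ∩ ball (WithLp.toLp 2 fun j => (k j : ℝ) : Euc d) (ρ₀ / 4) := by
    intro z hz
    obtain ⟨m, hm1, hm2⟩ := exists_rat_btwn (show (0 : ℝ) < ρ₀ / (4 * d) by positivity)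
    have hm : 0 < m := by exact_mod_cast hm1
    rw [lt_div_iff₀ (by positivity)] at hm2
    obtain ⟨Q, hQ1, hQ2, -⟩ := exists_grid hm z (r := d * m + 1) (by positivity)
    obtain ⟨q, hq, hzq⟩ := hQ2 z (by simp)
    choose k hk using (hQ1 q hq).1
    have hqk : (WithLp.toLp 2 fun j => (k j : ℝ) : Euc d) = q := by
      ext j
      simp [hk]
    refine mem_iUnion.2 ⟨k, hz, ?_⟩
    rw [hqk, mem_ball]
    linarith
  refine (dimH_mono hcover).trans ?_
  rw [dimH_iUnion]
  refine iSup_le fun k => dimH_le fun s hs => ?_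
  by_contra! hlt
  refine hausdorffMeasure_inter_ball_ne_top hpar hδ (s := (s : ℝ)) ?_ hτ
    (q := WithLp.toLp 2 fun j => (k j : ℝ)) (fun j => ⟨k j, rfl⟩) hs
  rw [← ENNReal.ofReal_coe_nnreal] at hlt
  exact (ENNReal.ofReal_lt_ofReal_iff_of_nonneg hδ.le).1 hlt
end
end

section
/- Let A ⊆ ℝ^d be an analytic (Σ¹₁) set and let δ ≤ dimH(A). Then for every δ' < δ there is a compact set K ⊆ A with dimH(K) ≥ δ'. -/
/-!
The proof runs through dyadic net contents. For `s > 0`, the content `dyadicContent s E` is the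
infimum of `∑ (side length)ˢ` over the covers of `E` by dyadic cubes of side at most `1`. A set of
zero content has `s`-dimensional Hausdorff measure zero, and a set of Hausdorff measure zero has
open neighbourhoods of arbitrarily small content.

The content is continuous along increasing sequences `E n` of arbitrary sets
(`netContent_iUnion_of_monotone`). For a cube `Q` put `L Q = ⨆ n, content (E n ∩ Q)`, so that
`L Q` is at most the weight of `Q`, and `L` is superadditive over the children of `Q` whenever
`L Q` is strictly smaller than that weight. Subadditivity of the content shows that the weights
of the cubes in a nearly optimal cover of `E n` exceed their `L`-values by a small total amount.
Take all these covers together with all cubes whose weight equals their `L`-value, and keep the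
maximal cubes: they cover `⋃ n, E n`, their `L`-values add up to at most `⨆ n, content (E n)`, and
their weights exceed that sum by as little as desired.

Write the analytic set as `range f` with `f` continuous on `ℕ → ℕ`. By this continuity, bounds
`b 0, b 1, …` on the successive coordinates can be chosen so that the images of
`{x | ∀ i < n, x i ≤ b i}` all have content above a fixed `a > 0`
(`exists_compact_forall_isOpen_lt`). Every open neighbourhood of the compact set
`K = f '' {x | ∀ i, x i ≤ b i}` contains one of these images, so its content exceeds `a`. Hence `K`
has nonzero `s`-dimensional Hausdorff measure, and `s ≤ dimH K`.
-/

open MeasureTheory Set ENNReal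

/-! ### Net contents and their continuity along increasing sequences -/

section NetContent

variable {X ι : Type*}

/-- A set `S` of labels `(k, i)` covers `E` when every point of `E` lies in a cell of `S`; here
`c k x` is the label of the level-`k` cell containing `x`. -/
def NetCovers (c : ℕ → X → ι) (S : Set (ℕ × ι)) (E : Set X) : Prop :=
  ∀ x ∈ E, ∃ k, (k, c k x) ∈ S

/-- Total weight of a family of cells, a cell of level `k` having weight `w k`. -/
noncomputable def netCost (w : ℕ → ℝ≥0∞) (S : Set (ℕ × ι)) : ℝ≥0∞ :=
  ∑' p : ℕ × ι, S.indicator (fun p => w p.1) p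

/-- The net content of `E`: the infimum of the total weights of families of cells covering `E`. -/
noncomputable def netContent (c : ℕ → X → ι) (w : ℕ → ℝ≥0∞) (E : Set X) : ℝ≥0∞ :=
  ⨅ (S : Set (ℕ × ι)) (_ : NetCovers c S E), netCost w S

/-- The cell labelled by `p = (k, i)`. -/
def netCell (c : ℕ → X → ι) (p : ℕ × ι) : Set X := {x | c p.1 x = p.2}

variable {c : ℕ → X → ι} {w : ℕ → ℝ≥0∞}

lemma netContent_le {S : Set (ℕ × ι)} {E : Set X} (h : NetCovers c S E) :
    netContent c w E ≤ netCost w S := iInf₂_le S h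

lemma exists_cover_of_netContent_lt {E : Set X} {a : ℝ≥0∞} (h : netContent c w E < a) :
    ∃ S, NetCovers c S E ∧ netCost w S < a := by
  simpa [netContent, iInf_lt_iff] using h

lemma netContent_mono {E F : Set X} (h : E ⊆ F) : netContent c w E ≤ netContent c w F :=
  le_iInf₂ fun _ hS => netContent_le fun x hx => hS x (h hx)

lemma netContent_empty : netContent c w (∅ : Set X) = 0 := by
  refine le_antisymm ((netContent_le (S := ∅) (by simp [NetCovers])).trans ?_) zero_le
  simp [netCost]

lemma netContent_iUnion_le {α : Type*} [Countable α] (E : α → Set X) :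
    netContent c w (⋃ a, E a) ≤ ∑' a, netContent c w (E a) := by
  by_cases htop : ∑' a, netContent c w (E a) = ∞
  · simp [htop]
  refine ENNReal.le_of_forall_pos_le_add fun ε hε _ => ?_
  obtain ⟨e, he, hes⟩ := ENNReal.exists_pos_sum_of_countable (ε := ε) (by positivity) α
  have hlt : ∀ a, netContent c w (E a) < netContent c w (E a) + e a := fun a =>
    ENNReal.lt_add_right (ENNReal.ne_top_of_tsum_ne_top htop a) (by simpa using (he a).ne')
  choose S hS hSc using fun a => exists_cover_of_netContent_lt (hlt a)
  have hcov : NetCovers c (⋃ a, S a) (⋃ a, E a) := by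
    intro x hx
    obtain ⟨a, ha⟩ := mem_iUnion.1 hx
    obtain ⟨k, hk⟩ := hS a x ha
    exact ⟨k, mem_iUnion.2 ⟨a, hk⟩⟩
  calc netContent c w (⋃ a, E a) ≤ netCost w (⋃ a, S a) := netContent_le hcov
    _ ≤ ∑' p : ℕ × ι, ∑' a, (S a).indicator (fun p => w p.1) p := by
        refine ENNReal.tsum_le_tsum fun p => ?_
        refine indicator_apply_le' (fun hp => ?_) fun _ => zero_le
        obtain ⟨a, ha⟩ := mem_iUnion.1 hp
        exact le_trans (by simp [ha]) (ENNReal.le_tsum a)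
    _ = ∑' a, netCost w (S a) := ENNReal.tsum_comm
    _ ≤ ∑' a, (netContent c w (E a) + e a) := ENNReal.tsum_le_tsum fun a => (hSc a).le
    _ ≤ ∑' a, netContent c w (E a) + ε := by
        rw [ENNReal.tsum_add]
        gcongr

lemma netContent_inter_cell_le (E : Set X) (p : ℕ × ι) :
    netContent c w (E ∩ netCell c p) ≤ w p.1 := by
  refine (netContent_le (S := {p}) ?_).trans ?_
  · rintro x ⟨-, hx⟩
    exact ⟨p.1, by rw [show c p.1 x = p.2 from hx]; simp⟩
  · rw [netCost, tsum_eq_single p]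
    · simp
    · intro q hq
      simp [hq]

lemma netContent_le_tsum_cells [Countable ι] {S : Set (ℕ × ι)} {E : Set X}
    (h : NetCovers c S E) :
    netContent c w E ≤
      ∑' p : ℕ × ι, S.indicator (fun p => netContent c w (E ∩ netCell c p)) p := by
  classical
  have hsub : E ⊆ ⋃ p : ℕ × ι, if p ∈ S then E ∩ netCell c p else ∅ := by
    intro x hx
    obtain ⟨k, hk⟩ := h x hx
    refine mem_iUnion.2 ⟨(k, c k x), ?_⟩
    simp [hk, hx, netCell]
  refine (netContent_mono hsub).trans ((netContent_iUnion_le _).trans ?_)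
  refine ENNReal.tsum_le_tsum fun p => ?_
  by_cases hp : p ∈ S <;> simp [hp, netContent_empty]

/-- The partitions refine one another, `P k` being the map from labels of level `k + 1` to
labels of the containing cells of level `k`. -/
lemma label_eq_of_le {P : ℕ → ι → ι} (hP : ∀ k x, c k x = P k (c (k + 1) x)) {k l : ℕ}
    (hkl : k ≤ l) {x y : X} (h : c l x = c l y) : c k x = c k y := by
  induction l, hkl using Nat.le_induction with
  | base => exact h
  | succ n _ ih => exact ih (by rw [hP n x, hP n y, h])

/-- Inside a cell, an optimal cover either uses a cell at least as large, or splits into covers of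
the children. -/
lemma min_le_netContent_inter_cell {P : ℕ → ι → ι} (hw : Antitone w)
    (hP : ∀ k x, c k x = P k (c (k + 1) x)) (E : Set X) (k : ℕ) (i : ι) :
    min (w k) (∑' j, {j | P k j = i}.indicator
      (fun j => netContent c w (E ∩ netCell c (k + 1, j))) j)
      ≤ netContent c w (E ∩ netCell c (k, i)) := by
  classical
  refine le_iInf₂ fun S hS => ?_
  by_cases hbig : ∃ p ∈ S, p.1 ≤ k
  · obtain ⟨p, hp, hpk⟩ := hbig
    refine (min_le_left _ _).trans ((hw hpk).trans ?_)
    exact le_trans (by simp [hp]) (ENNReal.le_tsum p)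
  · push Not at hbig
    refine (min_le_right _ _).trans ?_
    -- The members of `S` that meet the child labelled `j`.
    let T : ι → Set (ℕ × ι) := fun j => {p | p ∈ S ∧ ∃ x, c p.1 x = p.2 ∧ c (k + 1) x = j}
    have hT : ∀ j, {j | P k j = i}.indicator
        (fun j => netContent c w (E ∩ netCell c (k + 1, j))) j ≤ netCost w (T j) := by
      intro j
      refine indicator_apply_le' (fun hj => ?_) fun _ => zero_le
      refine netContent_le ?_
      rintro x ⟨hxE, hxj⟩
      have hxj' : c (k + 1) x = j := hxj
      have hxi : x ∈ netCell c (k, i) := by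
        change c k x = i
        rw [hP k x, hxj']
        exact hj
      obtain ⟨l, hl⟩ := hS x ⟨hxE, hxi⟩
      exact ⟨l, hl, x, rfl, hxj'⟩
    refine (ENNReal.tsum_le_tsum hT).trans ?_
    unfold netCost
    rw [ENNReal.tsum_comm]
    refine ENNReal.tsum_le_tsum fun p => ?_
    by_cases hp : ∃ j, p ∈ T j
    · obtain ⟨j, hj⟩ := hp
      rw [tsum_eq_single j]
      · refine indicator_apply_le' (fun _ => ?_) fun _ => zero_le
        simp [hj.1]
      · intro j' hj'
        refine indicator_of_notMem (fun hmem => hj' ?_) _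
        obtain ⟨hpS, x, hx, hxj⟩ := hj
        obtain ⟨-, y, hy, hyj⟩ := hmem
        rw [← hyj, ← hxj]
        exact label_eq_of_le hP (hbig p hpS) (hy.trans hx.symm)
    · push Not at hp
      simp [hp]

/-- The labels of level `n` none of whose strict ancestors belong to `F`. -/
def netAlive (P : ℕ → ι → ι) (F : Set (ℕ × ι)) : ℕ → Set ι
  | 0 => univ
  | n + 1 => {j | P n j ∈ netAlive P F n ∧ (n, P n j) ∉ F}

/-- If `L` is superadditive at every node outside `F`, then the `L`-values of the maximal members
of `F` add up to at most the total of `L` at level `0`. -/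
lemma tsum_maximal_le {P : ℕ → ι → ι} {F : Set (ℕ × ι)} {L : ℕ × ι → ℝ≥0∞}
    (hL : ∀ k i, (k, i) ∉ F →
      ∑' j, {j | P k j = i}.indicator (fun j => L (k + 1, j)) j ≤ L (k, i)) :
    ∑' p : ℕ × ι, {p : ℕ × ι | p ∈ F ∧ p.2 ∈ netAlive P F p.1}.indicator L p
      ≤ ∑' i, L (0, i) := by
  classical
  set M : Set (ℕ × ι) := {p : ℕ × ι | p ∈ F ∧ p.2 ∈ netAlive P F p.1} with hM
  have key : ∀ n, (∑ k ∈ Finset.range n, ∑' i, M.indicator L (k, i)) +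
      ∑' i, (netAlive P F n).indicator (fun i => L (n, i)) i ≤ ∑' i, L (0, i) := by
    intro n
    induction n with
    | zero => simp [netAlive]
    | succ n ih =>
      refine le_trans ?_ ih
      rw [Finset.sum_range_succ, add_assoc]
      gcongr
      -- Sum over the living nodes of level `n + 1` by grouping them under their parents.
      have h1 : ∑' j, (netAlive P F (n + 1)).indicator (fun j => L (n + 1, j)) j =
          ∑' i, ∑' j, if P n j = i then
            (netAlive P F (n + 1)).indicator (fun j => L (n + 1, j)) j else 0 := by
        rw [ENNReal.tsum_comm]
        refine tsum_congr fun j => ?_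
        rw [tsum_eq_single (P n j)]
        · simp
        · intro i hi
          simp [hi.symm]
      rw [h1, ← ENNReal.tsum_add]
      refine ENNReal.tsum_le_tsum fun i => ?_
      by_cases hi : i ∈ netAlive P F n
      · by_cases hF : (n, i) ∈ F
        · have h2 : ∀ j, (if P n j = i then
              (netAlive P F (n + 1)).indicator (fun j => L (n + 1, j)) j else 0) = 0 := by
            intro j
            split_ifs with hj
            · refine indicator_of_notMem (fun hmem => hmem.2 ?_) _
              rw [hj]; exact hF
            · rfl
          simp only [h2, tsum_zero, add_zero]
          rw [indicator_of_mem hi]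
          exact indicator_le_self' (fun _ _ => zero_le) _
        · have h3 : M.indicator L (n, i) = 0 := indicator_of_notMem (fun h => hF h.1) _
          rw [h3, zero_add, indicator_of_mem hi]
          refine le_trans (ENNReal.tsum_le_tsum fun j => ?_) (hL n i hF)
          split_ifs with hj
          · rw [indicator_of_mem (show j ∈ {j | P n j = i} from hj)]
            exact indicator_le_self' (f := fun j => L (n + 1, j)) (fun _ _ => zero_le) _
          · exact zero_le
      · have h3 : M.indicator L (n, i) = 0 := indicator_of_notMem (fun h => hi h.2) _
        have h2 : ∀ j, (if P n j = i then
              (netAlive P F (n + 1)).indicator (fun j => L (n + 1, j)) j else 0) = 0 := by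
          intro j
          split_ifs with hj
          · refine indicator_of_notMem (fun hmem => hi ?_) _
            rw [← hj]; exact hmem.1
          · rfl
        simp [h3, h2]
  rw [ENNReal.tsum_prod', ENNReal.tsum_eq_iSup_nat]
  exact iSup_le fun n => le_self_add.trans (key n)

/-- Net contents are continuous along increasing sequences of arbitrary sets. -/
theorem netContent_iUnion_of_monotone [Countable ι] {P : ℕ → ι → ι} (hw : Antitone w)
    (hP : ∀ k x, c k x = P k (c (k + 1) x)) {i₀ : ι} (h₀ : ∀ x, c 0 x = i₀)
    {E : ℕ → Set X} (hE : Monotone E) :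
    netContent c w (⋃ n, E n) ≤ ⨆ n, netContent c w (E n) := by
  classical
  by_cases htop : ⨆ n, netContent c w (E n) = ∞
  · simp [htop]
  set L : ℕ × ι → ℝ≥0∞ := fun p => ⨆ n, netContent c w (E n ∩ netCell c p) with hLdef
  have hLw : ∀ p, L p ≤ w p.1 := fun p => iSup_le fun n => netContent_inter_cell_le _ _
  have hLstep : ∀ k i, L (k, i) < w k →
      ∑' j, {j | P k j = i}.indicator (fun j => L (k + 1, j)) j ≤ L (k, i) := by
    intro k i hlt
    rw [ENNReal.tsum_eq_iSup_sum]
    refine iSup_le fun s => ?_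
    have hmono : ∀ j, Monotone fun n => {j | P k j = i}.indicator
        (fun j => netContent c w (E n ∩ netCell c (k + 1, j))) j := by
      intro j m n hmn
      exact indicator_le_indicator (netContent_mono (inter_subset_inter_left _ (hE hmn)))
    have hind : ∀ j, {j | P k j = i}.indicator (fun j => L (k + 1, j)) j =
        ⨆ n, {j | P k j = i}.indicator
          (fun j => netContent c w (E n ∩ netCell c (k + 1, j))) j := by
      intro j
      by_cases hj : P k j = i <;> simp [hj, hLdef]
    simp_rw [hind]
    rw [ENNReal.finsetSum_iSup_of_monotone hmono]
    refine iSup_le fun n => (ENNReal.sum_le_tsum s).trans ?_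
    have hle : netContent c w (E n ∩ netCell c (k, i)) ≤ L (k, i) :=
      le_iSup (fun n => netContent c w (E n ∩ netCell c (k, i))) n
    have hmin := (min_le_netContent_inter_cell hw hP (E n) k i).trans hle
    rcases min_le_iff.1 hmin with h | h
    · exact absurd h (not_le.2 hlt)
    · exact h
  have hL0 : ∑' i, L (0, i) ≤ ⨆ n, netContent c w (E n) := by
    rw [tsum_eq_single i₀]
    · exact iSup_mono fun n => netContent_mono inter_subset_left
    · intro i hi
      have hempty : netCell c (0, i) = ∅ := by
        ext x
        simp [netCell, h₀, hi.symm]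
      simp [hLdef, hempty, netContent_empty]
  refine ENNReal.le_of_forall_pos_le_add fun ε hε _ => ?_
  obtain ⟨e, he, hes⟩ := ENNReal.exists_pos_sum_of_countable (ε := ε) (by positivity) ℕ
  have hfin : ∀ n, netContent c w (E n) ≠ ∞ := fun n =>
    ne_top_of_le_ne_top htop (le_iSup (fun n => netContent c w (E n)) n)
  choose S hS hSc using fun n => exists_cover_of_netContent_lt
    (ENNReal.lt_add_right (hfin n) (b := e n) (by simpa using (he n).ne'))
  -- A nearly optimal cover of `E n` consists of cells whose weights nearly equal their `L`-values.
  have hexcess : ∀ n, ∑' p, (S n).indicator (fun p => w p.1 - L p) p ≤ e n := by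
    intro n
    have hSL : ∑' p, (S n).indicator L p ≤ netCost w (S n) :=
      ENNReal.tsum_le_tsum fun p => indicator_le_indicator (hLw p)
    have hSLtop : ∑' p, (S n).indicator L p ≠ ∞ :=
      ne_top_of_le_ne_top ((hSc n).trans_le le_top).ne hSL
    refine (ENNReal.add_le_add_iff_right hSLtop).1 ?_
    rw [← ENNReal.tsum_add]
    calc ∑' p, ((S n).indicator (fun p => w p.1 - L p) p + (S n).indicator L p)
        = netCost w (S n) := by
          refine tsum_congr fun p => ?_
          by_cases hp : p ∈ S n
          · simp [hp, tsub_add_cancel_of_le (hLw p)]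
          · simp [hp]
      _ ≤ netContent c w (E n) + e n := (hSc n).le
      _ ≤ ∑' p, (S n).indicator L p + e n := by
          gcongr
          refine (netContent_le_tsum_cells (hS n)).trans (ENNReal.tsum_le_tsum fun p => ?_)
          exact indicator_le_indicator
            (le_iSup (fun n => netContent c w (E n ∩ netCell c p)) n)
      _ = _ := add_comm _ _
  set F : Set (ℕ × ι) := (⋃ n, S n) ∪ {p | w p.1 ≤ L p} with hF
  set M : Set (ℕ × ι) := {p : ℕ × ι | p ∈ F ∧ p.2 ∈ netAlive P F p.1} with hM
  have hcov : NetCovers c M (⋃ n, E n) := by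
    intro x hx
    obtain ⟨n, hn⟩ := mem_iUnion.1 hx
    have hex : ∃ k, (k, c k x) ∈ F := by
      obtain ⟨k, hk⟩ := hS n x hn
      exact ⟨k, Or.inl (mem_iUnion.2 ⟨n, hk⟩)⟩
    refine ⟨Nat.find hex, Nat.find_spec hex, ?_⟩
    have hal : ∀ k, k ≤ Nat.find hex → c k x ∈ netAlive P F k := by
      intro k
      induction k with
      | zero => intro _; trivial
      | succ k ih =>
        intro hk
        change P k (c (k + 1) x) ∈ netAlive P F k ∧ (k, P k (c (k + 1) x)) ∉ F
        rw [← hP]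
        exact ⟨ih (Nat.le_of_succ_le hk), Nat.find_min hex hk⟩
    exact hal _ le_rfl
  calc netContent c w (⋃ n, E n) ≤ netCost w M := netContent_le hcov
    _ ≤ ∑' p, (M.indicator L p + ∑' n, (S n).indicator (fun p => w p.1 - L p) p) := by
        refine ENNReal.tsum_le_tsum fun p => ?_
        refine indicator_apply_le' (fun hp => ?_) fun _ => zero_le
        rw [indicator_of_mem hp]
        rcases hp.1 with h | h
        · obtain ⟨n, hn⟩ := mem_iUnion.1 h
          calc w p.1 = L p + (w p.1 - L p) := (add_tsub_cancel_of_le (hLw p)).symm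
            _ ≤ _ := by
              gcongr
              exact le_trans (by simp [hn]) (ENNReal.le_tsum n)
        · exact le_add_right h
    _ = ∑' p, M.indicator L p + ∑' n, ∑' p, (S n).indicator (fun p => w p.1 - L p) p := by
        rw [ENNReal.tsum_add, ENNReal.tsum_comm (β := ℕ)]
    _ ≤ (⨆ n, netContent c w (E n)) + ε := by
        gcongr
        · refine (tsum_maximal_le fun k i hki => hLstep k i ?_).trans hL0
          exact not_le.1 fun h => hki (Or.inr h)
        · exact (ENNReal.tsum_le_tsum hexcess).trans hes.le

end NetContent

/-! ### Capacitability of analytic sets -/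

/-- The inductive choice in Choquet's capacitability theorem: if a monotone set function `φ` is
continuous along increasing sequences, then `range f` contains a compact set all of whose open
neighbourhoods have `φ`-value above a prescribed number smaller than `φ (range f)`. -/
theorem exists_compact_forall_isOpen_lt {X : Type*} [TopologicalSpace X] (φ : Set X → ℝ≥0∞)
    (hmono : ∀ ⦃E F : Set X⦄, E ⊆ F → φ E ≤ φ F)
    (hcont : ∀ E : ℕ → Set X, Monotone E → φ (⋃ n, E n) ≤ ⨆ n, φ (E n))
    {f : (ℕ → ℕ) → X} (hf : Continuous f) {a : ℝ≥0∞} (ha : a < φ (range f)) :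
    ∃ K : Set X, IsCompact K ∧ K ⊆ range f ∧ ∀ V, IsOpen V → K ⊆ V → a < φ V := by
  have hstep : ∀ (n : ℕ) (D : Set (ℕ → ℕ)), ∃ m : ℕ,
      a < φ (f '' D) → a < φ (f '' (D ∩ {x | x n ≤ m})) := by
    intro n D
    by_cases hD : a < φ (f '' D)
    · have hU : f '' D = ⋃ m : ℕ, f '' (D ∩ {x | x n ≤ m}) := by
        rw [← image_iUnion, ← inter_iUnion]
        congr 1
        refine (inter_eq_left.2 fun x _ => mem_iUnion.2 ⟨x n, ?_⟩).symm
        exact le_refl (x n)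
      have hM : Monotone fun m : ℕ => f '' (D ∩ {x | x n ≤ m}) := by
        intro m m' h
        refine image_mono (inter_subset_inter_right _ fun x hx => ?_)
        exact le_trans (show x n ≤ m from hx) h
      have hlt := hD
      rw [hU] at hlt
      obtain ⟨m, hm⟩ := lt_iSup_iff.1 (hlt.trans_le (hcont _ hM))
      exact ⟨m, fun _ => hm⟩
    · exact ⟨0, fun h => absurd h hD⟩
  choose g hg using hstep
  let D : ℕ → Set (ℕ → ℕ) := fun n =>
    Nat.rec univ (fun n Dn => Dn ∩ {x | x n ≤ g n Dn}) n
  have hDsucc : ∀ n, D (n + 1) = D n ∩ {x | x n ≤ g n (D n)} := fun n => rfl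
  have hDlt : ∀ n, a < φ (f '' D n) := by
    intro n
    induction n with
    | zero =>
      change a < φ (f '' univ)
      rwa [image_univ]
    | succ n ih => exact hg n (D n) ih
  set b : ℕ → ℕ := fun n => g n (D n) with hb
  have hDb : ∀ n, ∀ x ∈ D n, ∀ i < n, x i ≤ b i := by
    intro n
    induction n with
    | zero => intro x _ i hi; omega
    | succ n ih =>
      intro x hx i hi
      rw [hDsucc] at hx
      rcases Nat.lt_succ_iff_lt_or_eq.1 hi with h | h
      · exact ih x hx.1 i h
      · rw [h]; exact hx.2
  set C : Set (ℕ → ℕ) := univ.pi fun i => Iic (b i) with hC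
  have hCc : IsCompact C := isCompact_univ_pi fun i => (finite_Iic (b i)).isCompact
  refine ⟨f '' C, hCc.image hf, image_subset_range _ _, fun V hV hKV => ?_⟩
  suffices h : ∃ n, f '' D n ⊆ V by
    obtain ⟨n, hn⟩ := h
    exact (hDlt n).trans_le (hmono hn)
  by_contra! hno
  have hno' : ∀ n, ∃ x ∈ D n, f x ∉ V := by
    intro n
    obtain ⟨_, ⟨x, hx, rfl⟩, hxV⟩ := not_subset.1 (hno n)
    exact ⟨x, hx, hxV⟩
  choose x hxD hxV using hno'
  -- Truncating `x n` by `b` lands in the compact set and keeps the first `n` coordinates.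
  have hyC : ∀ n, (fun i => min (x n i) (b i)) ∈ C := fun n i _ => mem_Iic.2 (min_le_right _ _)
  obtain ⟨y, hy, ψ, hψ, hlim⟩ := hCc.tendsto_subseq hyC
  have hxlim : Filter.Tendsto (fun n => x (ψ n)) Filter.atTop (nhds y) := by
    rw [tendsto_pi_nhds] at hlim ⊢
    intro i
    refine (hlim i).congr' ?_
    filter_upwards [Filter.eventually_gt_atTop i] with n hn
    exact min_eq_left (hDb _ _ (hxD (ψ n)) i (hn.trans_le (hψ.id_le n)))
  have hev := ((hf.tendsto y).comp hxlim).eventually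
    (hV.mem_nhds (hKV (mem_image_of_mem f hy)))
  obtain ⟨n, hn⟩ := hev.exists
  exact hxV _ hn

/-! ### Dyadic content and Hausdorff measure -/

section Dyadic

variable {d : ℕ}

/-- Label of the dyadic cube of side `2⁻ᵏ` containing `x`, placed at level `k + 1`; level `0` has
a single cell, the whole space. -/
noncomputable def dyadicLabel : ℕ → (Fin d → ℝ) → (Fin d → ℤ)
  | 0, _ => 0
  | k + 1, x => fun i => ⌊2 ^ k * x i⌋

/-- Label of the parent, at level `k`, of a cell of level `k + 1`. -/
def dyadicParent : ℕ → (Fin d → ℤ) → (Fin d → ℤ)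
  | 0, _ => 0
  | _ + 1, z => fun i => z i / 2

/-- The weight `(2⁻ᵏ)ˢ` of a dyadic cube of side `2⁻ᵏ`; the whole space gets infinite weight and
so never occurs in a cover of finite cost. -/
noncomputable def dyadicWeight (s : ℝ) : ℕ → ℝ≥0∞
  | 0 => ∞
  | k + 1 => ((2⁻¹ : ℝ≥0∞) ^ k) ^ s

lemma dyadicLabel_eq_parent (k : ℕ) (x : Fin d → ℝ) :
    dyadicLabel k x = dyadicParent k (dyadicLabel (k + 1) x) := by
  cases k with
  | zero => rfl
  | succ k =>
    funext i
    change ⌊2 ^ k * x i⌋ = ⌊2 ^ (k + 1) * x i⌋ / 2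
    have h := Int.floor_div_natCast (2 ^ (k + 1) * x i) 2
    push_cast at h
    rw [← h]
    congr 1
    ring

lemma dyadicWeight_antitone {s : ℝ} (hs : 0 < s) : Antitone (dyadicWeight s) := by
  refine antitone_nat_of_succ_le fun k => ?_
  cases k with
  | zero => exact le_top
  | succ k =>
    refine ENNReal.rpow_le_rpow ?_ hs.le
    exact pow_le_pow_right_of_le_one' (by simp) (Nat.le_succ k)

/-- The `s`-dimensional dyadic net content on `ℝᵈ`. -/
noncomputable def dyadicContent (s : ℝ) (E : Set (Fin d → ℝ)) : ℝ≥0∞ :=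
  netContent dyadicLabel (dyadicWeight s) E

lemma ofReal_inv_two_pow (k : ℕ) : ENNReal.ofReal ((2⁻¹ : ℝ) ^ k) = (2⁻¹ : ℝ≥0∞) ^ k := by
  rw [ENNReal.ofReal_pow (by norm_num), ENNReal.ofReal_inv_of_pos (by norm_num)]
  simp

lemma ediam_dyadic_cell_le (k : ℕ) (z : Fin d → ℤ) :
    Metric.ediam (netCell dyadicLabel (k + 1, z)) ≤ (2⁻¹ : ℝ≥0∞) ^ k := by
  refine Metric.ediam_le fun x hx y hy => ?_
  refine edist_pi_le_iff.2 fun i => ?_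
  have hx' : ⌊2 ^ k * x i⌋ = z i := congrFun (show dyadicLabel (k + 1) x = z from hx) i
  have hy' : ⌊2 ^ k * y i⌋ = z i := congrFun (show dyadicLabel (k + 1) y = z from hy) i
  have h := Int.abs_sub_lt_one_of_floor_eq_floor (hx'.trans hy'.symm)
  rw [edist_dist, Real.dist_eq, ← ofReal_inv_two_pow]
  refine ENNReal.ofReal_le_ofReal ?_
  rw [← mul_sub, abs_mul, abs_of_pos (by positivity)] at h
  rw [inv_pow, ← one_div, le_div_iff₀ (by positivity), mul_comm]
  exact h.le

lemma hausdorffMeasure_eq_zero_of_dyadicContent {s : ℝ} (hs : 0 < s) {E : Set (Fin d → ℝ)}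
    (h : dyadicContent s E = 0) : μH[s] E = 0 := by
  set e : ℕ → ℝ≥0∞ := fun n => ((2⁻¹ : ℝ≥0∞) ^ n) ^ s with he
  have hepos : ∀ n, 0 < e n := fun n =>
    ENNReal.rpow_pos (ENNReal.pow_pos (by simp) n) (ENNReal.pow_ne_top (by simp))
  have hpow : Filter.Tendsto (fun n : ℕ => (2⁻¹ : ℝ≥0∞) ^ n) Filter.atTop (nhds 0) :=
    ENNReal.tendsto_pow_atTop_nhds_zero_of_lt_one (by simp)
  have hetends : Filter.Tendsto e Filter.atTop (nhds 0) := by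
    have h1 := ((ENNReal.continuous_rpow_const (y := s)).tendsto 0).comp hpow
    rwa [ENNReal.zero_rpow_of_pos hs] at h1
  have hex : ∀ n, ∃ S : Set (ℕ × (Fin d → ℤ)),
      NetCovers dyadicLabel S E ∧ netCost (dyadicWeight s) S < e n := fun n =>
    exists_cover_of_netContent_lt (lt_of_eq_of_lt h (hepos n))
  choose S hS hSc using hex
  have hcell : ∀ n, ∀ p ∈ S n, ∃ k, p.1 = k + 1 ∧ n ≤ k := by
    rintro n ⟨l, z⟩ hp
    have hlt : dyadicWeight s l < e n :=
      lt_of_le_of_lt (le_trans (by simp [hp]) (ENNReal.le_tsum (l, z))) (hSc n)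
    cases l with
    | zero => exact absurd hlt (not_lt.2 le_top)
    | succ k =>
      refine ⟨k, rfl, ?_⟩
      by_contra! hkn
      refine absurd hlt (not_lt.2 (ENNReal.rpow_le_rpow ?_ hs.le))
      exact pow_le_pow_right_of_le_one' (by simp) hkn.le
  have hle := Measure.hausdorffMeasure_le_liminf_tsum (β := ℕ) (ι := fun n => S n) s E
    (l := Filter.atTop) (fun n => (2⁻¹ : ℝ≥0∞) ^ n) hpow
    (fun n p => netCell dyadicLabel p.1)
    (Filter.Eventually.of_forall fun n => by
      rintro ⟨⟨l, z⟩, hp⟩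
      obtain ⟨k, hk, hnk⟩ := hcell n _ hp
      obtain rfl : l = k + 1 := hk
      exact (ediam_dyadic_cell_le k z).trans (pow_le_pow_right_of_le_one' (by simp) hnk))
    (Filter.Eventually.of_forall fun n => by
      intro x hx
      obtain ⟨k, hk⟩ := hS n x hx
      exact mem_iUnion.2 ⟨⟨_, hk⟩, rfl⟩)
  have hsum : ∀ n, ∑' p : S n, Metric.ediam (netCell dyadicLabel p.1) ^ s ≤ e n := by
    intro n
    refine le_trans ?_ (hSc n).le
    rw [netCost, ← tsum_subtype]
    refine ENNReal.tsum_le_tsum ?_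
    rintro ⟨⟨l, z⟩, hp⟩
    obtain ⟨k, hk, -⟩ := hcell n _ hp
    obtain rfl : l = k + 1 := hk
    exact ENNReal.rpow_le_rpow (ediam_dyadic_cell_le k z) hs.le
  refine le_antisymm (hle.trans ?_) zero_le
  calc _ ≤ Filter.liminf e Filter.atTop :=
        Filter.liminf_le_liminf (Filter.Eventually.of_forall hsum)
    _ = 0 := hetends.liminf_eq

/-- A ball of radius in `(2⁻ᵏ⁻¹, 2⁻ᵏ]` meets at most three intervals of length `2⁻ᵏ` per
coordinate. -/
lemma dyadicContent_ball_le {s : ℝ} (hs : 0 < s) (x : Fin d → ℝ) {r : ℝ} (hr : 0 < r)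
    (hr1 : r ≤ 1) :
    dyadicContent s (Metric.ball x r) ≤ (3 ^ d * 2 ^ s) * ENNReal.ofReal r ^ s := by
  classical
  obtain ⟨k, hk1, hk2⟩ := exists_nat_pow_near_of_lt_one hr hr1
    (show (0 : ℝ) < 2⁻¹ by norm_num) (by norm_num)
  set T : Finset (Fin d → ℤ) :=
    Fintype.piFinset fun i => Finset.Icc (⌊2 ^ k * x i⌋ - 1) (⌊2 ^ k * x i⌋ + 1) with hT
  have hcov : NetCovers dyadicLabel
      (↑(T.image fun z => (k + 1, z)) : Set (ℕ × (Fin d → ℤ))) (Metric.ball x r) := by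
    intro y hy
    refine ⟨k + 1, ?_⟩
    rw [Finset.mem_coe, Finset.mem_image]
    refine ⟨_, Fintype.mem_piFinset.2 fun i => ?_, rfl⟩
    have hyi : |y i - x i| < r := by
      have := (dist_le_pi_dist y x i).trans_lt (Metric.mem_ball.1 hy)
      rwa [Real.dist_eq] at this
    have h2 : (2 : ℝ) ^ k * |y i - x i| < 1 := by
      have h3 : |y i - x i| < (2⁻¹ : ℝ) ^ k := hyi.trans_le hk2
      rw [inv_pow, ← one_div, lt_div_iff₀ (by positivity)] at h3
      linarith
    rw [← abs_of_pos (show (0 : ℝ) < 2 ^ k by positivity), ← abs_mul, mul_sub, abs_lt] at h2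
    change ⌊2 ^ k * y i⌋ ∈ _
    rw [Finset.mem_Icc]
    have hl := Int.floor_le (2 ^ k * x i)
    have hu := Int.lt_floor_add_one (2 ^ k * x i)
    constructor
    · rw [Int.le_floor]
      push_cast
      linarith [h2.1]
    · rw [← Int.lt_add_one_iff, Int.floor_lt]
      push_cast
      linarith [h2.2]
  have hcard : T.card = 3 ^ d := by
    rw [hT, Fintype.card_piFinset]
    have : ∀ i : Fin d, (Finset.Icc (⌊2 ^ k * x i⌋ - 1) (⌊2 ^ k * x i⌋ + 1)).card = 3 := by
      intro i
      rw [Int.card_Icc]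
      omega
    simp [this]
  calc dyadicContent s (Metric.ball x r)
      ≤ netCost (dyadicWeight s) (↑(T.image fun z => (k + 1, z)) : Set (ℕ × (Fin d → ℤ))) :=
        netContent_le hcov
    _ = 3 ^ d * ((2⁻¹ : ℝ≥0∞) ^ k) ^ s := by
        rw [netCost, ← tsum_subtype, Finset.tsum_subtype' (T.image fun z => (k + 1, z)) (fun p => dyadicWeight s p.1),
          Finset.sum_image fun a _ b _ h => (Prod.mk.inj h).2]
        simp [dyadicWeight, hcard]
    _ ≤ 3 ^ d * (2 * ENNReal.ofReal r) ^ s := by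
        gcongr
        rw [← ofReal_inv_two_pow, ← ENNReal.ofReal_ofNat 2,
          ← ENNReal.ofReal_mul (by norm_num)]
        refine ENNReal.ofReal_le_ofReal ?_
        rw [pow_succ] at hk1
        linarith
    _ = _ := by rw [ENNReal.mul_rpow_of_nonneg _ _ hs.le, mul_assoc]

/-- Sets of Hausdorff measure zero have open neighbourhoods of arbitrarily small content. -/
lemma exists_isOpen_dyadicContent_le {s : ℝ} (hs : 0 < s) {K : Set (Fin d → ℝ)}
    (hK : μH[s] K = 0) {ε : ℝ≥0∞} (hε : 0 < ε) :
    ∃ V, IsOpen V ∧ K ⊆ V ∧ dyadicContent s V ≤ (3 ^ d * 2 ^ s) * (ε + ε) := by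
  rw [Measure.hausdorffMeasure_apply] at hK
  have hK1 := (iSup_eq_bot.1 hK) 2⁻¹
  have hK2 := (iSup_eq_bot.1 hK1) (by simp)
  have hlt := lt_of_eq_of_lt hK2 hε
  simp only [iInf_lt_iff] at hlt
  obtain ⟨t, htK, htd, hts⟩ := hlt
  obtain ⟨e, he, hes⟩ := ENNReal.exists_pos_sum_of_countable hε.ne' ℕ
  -- Each nonempty `t n` lies in an open ball of radius barely larger than its diameter.
  have hex : ∀ n, ∃ U : Set (Fin d → ℝ), IsOpen U ∧ t n ⊆ U ∧ dyadicContent s U ≤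
      (3 ^ d * 2 ^ s) * ((⨆ _ : (t n).Nonempty, Metric.ediam (t n) ^ s) + e n) := by
    intro n
    rcases (t n).eq_empty_or_nonempty with hempty | ⟨x, hx⟩
    · refine ⟨∅, isOpen_empty, hempty.subset, ?_⟩
      exact netContent_empty.trans_le zero_le
    · have hD1 : Metric.ediam (t n) < 1 := (htd n).trans_lt (by simp)
      have hDtop : Metric.ediam (t n) ^ s ≠ ∞ :=
        ENNReal.rpow_ne_top_of_nonneg hs.le (hD1.trans one_lt_top).ne
      have hev : ∀ᶠ y in nhdsWithin (Metric.ediam (t n)) (Ioi (Metric.ediam (t n))),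
          y ^ s < Metric.ediam (t n) ^ s + e n :=
        (((ENNReal.continuous_rpow_const (y := s)).tendsto _).mono_left
          nhdsWithin_le_nhds).eventually
          (gt_mem_nhds (ENNReal.lt_add_right hDtop (by simpa using (he n).ne')))
      have : (nhdsWithin (Metric.ediam (t n)) (Ioi (Metric.ediam (t n)))).NeBot :=
        nhdsGT_neBot_of_exists_gt ⟨1, hD1⟩
      obtain ⟨y, hy, hyD, hy1⟩ := (hev.and (Ioo_mem_nhdsGT hD1)).exists
      have hytop : y ≠ ∞ := (hy1.trans one_lt_top).ne
      have hy0 : 0 < y.toReal := ENNReal.toReal_pos (zero_le.trans_lt hyD).ne' hytop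
      refine ⟨Metric.ball x y.toReal, Metric.isOpen_ball, fun z hz => ?_, ?_⟩
      · rw [← Metric.eball_ofReal, ENNReal.ofReal_toReal hytop]
        exact (Metric.edist_le_ediam_of_mem hz hx).trans_lt hyD
      · have hr1 : y.toReal ≤ 1 := by
          simpa using ENNReal.toReal_mono one_ne_top hy1.le
        refine (dyadicContent_ball_le hs x hy0 hr1).trans ?_
        rw [ENNReal.ofReal_toReal hytop, iSup_pos ⟨x, hx⟩]
        gcongr
  choose U hUo htU hUc using hex
  refine ⟨⋃ n, U n, isOpen_iUnion hUo, htK.trans (iUnion_mono htU), ?_⟩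
  refine (netContent_iUnion_le U).trans ((ENNReal.tsum_le_tsum hUc).trans ?_)
  rw [ENNReal.tsum_mul_left, ENNReal.tsum_add]
  gcongr

/-- The theorem for `ℝᵈ` with the sup norm, whose balls are cubes. -/
theorem exists_compact_le_dimH_pi {A : Set (Fin d → ℝ)} (hA : AnalyticSet A) {s : NNReal}
    (hs : 0 < s) (hsA : (s : ℝ≥0∞) < dimH A) :
    ∃ K, IsCompact K ∧ K ⊆ A ∧ (s : ℝ≥0∞) ≤ dimH K := by
  have hs' : (0 : ℝ) < s := hs
  rw [AnalyticSet] at hA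
  rcases hA with rfl | ⟨f, hf, rfl⟩
  · simp at hsA
  have hpos : 0 < dyadicContent s (range f) := by
    refine pos_iff_ne_zero.2 fun h => ?_
    have h1 := hausdorffMeasure_of_lt_dimH hsA
    rw [hausdorffMeasure_eq_zero_of_dyadicContent hs' h] at h1
    exact zero_ne_top h1
  obtain ⟨a, ha0, ha⟩ := exists_between hpos
  obtain ⟨K, hKc, hKA, hKV⟩ := exists_compact_forall_isOpen_lt (dyadicContent (s : ℝ))
    (fun _ _ h => netContent_mono h)
    (fun _ hE => netContent_iUnion_of_monotone (dyadicWeight_antitone hs')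
      dyadicLabel_eq_parent (fun _ => rfl) hE) hf ha
  refine ⟨K, hKc, hKA, le_dimH_of_hausdorffMeasure_ne_zero fun hK0 => ?_⟩
  set Q : ℝ≥0∞ := 3 ^ d * 2 ^ (s : ℝ) with hQ
  have hQtop : Q ≠ ∞ :=
    ENNReal.mul_ne_top (by simp) (ENNReal.rpow_ne_top_of_nonneg hs'.le (by simp))
  have hlim : Filter.Tendsto (fun ε : ℝ≥0∞ => Q * (ε + ε)) (nhdsWithin 0 (Ioi 0)) (nhds 0) := by
    have h1 : Continuous fun ε : ℝ≥0∞ => Q * (ε + ε) :=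
      (ENNReal.continuous_const_mul hQtop).comp (continuous_id.add continuous_id)
    have h2 := h1.tendsto 0
    simp only [add_zero, mul_zero] at h2
    exact h2.mono_left nhdsWithin_le_nhds
  obtain ⟨ε, hεa, hε⟩ := ((hlim.eventually (gt_mem_nhds ha0)).and self_mem_nhdsWithin).exists
  obtain ⟨V, hV, hKsub, hVc⟩ := exists_isOpen_dyadicContent_le hs' hK0 hε
  exact absurd ((hKV V hV hKsub).trans_le hVc) (not_lt.2 hεa.le)

end Dyadic

/-- Every analytic (Σ¹₁) set `A ⊆ ℝ^d` with `dimH A ≥ δ` contains, for each `δ' < δ`,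
a compact subset `K` with `dimH K ≥ δ'`. -/
theorem analytic_compact_subset_dimH {d : ℕ} (hd : 1 ≤ d)
    (A : Set (EuclideanSpace ℝ (Fin d))) (hA : MeasureTheory.AnalyticSet A)
    (δ δ' : ℝ≥0∞) (hδ : δ ≤ dimH A) (hδ' : δ' < δ) :
    ∃ K : Set (EuclideanSpace ℝ (Fin d)), IsCompact K ∧ K ⊆ A ∧ δ' ≤ dimH K := by
  obtain ⟨s, hs1, hs2⟩ := ENNReal.lt_iff_exists_nnreal_btwn.1 (hδ'.trans_le hδ)
  have hs0 : 0 < s := by exact_mod_cast zero_le.trans_lt hs1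
  -- Hausdorff dimension does not change under the bi-Lipschitz change of norm.
  let e : EuclideanSpace ℝ (Fin d) ≃L[ℝ] (Fin d → ℝ) := EuclideanSpace.equiv (Fin d) ℝ
  obtain ⟨K, hKc, hKA, hK⟩ := exists_compact_le_dimH_pi (hA.image_of_continuous e.continuous)
    hs0 (by rwa [e.dimH_image])
  refine ⟨e.symm '' K, hKc.image e.symm.continuous, ?_, ?_⟩
  · rintro _ ⟨x, hx, rfl⟩
    obtain ⟨y, hy, rfl⟩ := hKA hx
    simpa using hy
  · rw [e.symm.dimH_image]
    exact hs1.le.trans hK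
end
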